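/- Let n ≥ 1, c > 0, α > 0, β > 0, ε > 0, T > 0, set m₀ = ⌊n/2⌋ + 2 and B = (3 + 2c²)/min(1/2, c²). Let C_∞ > 0 be a constant such that ‖f‖_{L^∞(ℝⁿ)} ≤ C_∞·‖f‖_{H^{⌊n/2⌋+1}} for all Schwartz f, and let C_{m₀} > 0 be a constant such that every smooth spatially-Schwartz solution w of the inviscid Kuznetsov equation on a time interval on which ‖∂_t w(t,·)‖_{L^∞} ≤ 1/(2αε) satisfies E_{m₀}[w](t) ≤ B·E_{m₀}[w](0) + C_{m₀}·max(α,β)·ε·∫₀ᵗ E_{m₀}[w](τ)^{3/2} dτ. Let u : [0,T] × ℝⁿ → ℝ be a smooth spatially-Schwartz solution of the inviscid Kuznetsov equation ∂_t²u − c²Δu = αε·∂_t u·∂_t²u + βε·∇u·∇∂_t u with ‖∂_t u(0,·)‖_{L^∞} < 1/(2αε) and √(E_{m₀}[u](0)) ≤ 1/(4·√B·C_∞·α·ε). Set T₀ = 1/( C_{m₀}·max(α,β)·ε·√B·√(E_{m₀}[u](0)) ). Then for all t ∈ [0, min(T, T₀)] one has ‖∂_t u(t,·)‖_{L^∞(ℝⁿ)}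 ≤ 1/(2αε) and E_{m₀}[u](t) ≤ 4·B·E_{m₀}[u](0). -/

import Mathlib

/-!
On an interval where `|∂_t u| ≤ M := 1/(2αε)`, the assumed a priori estimate
`E ≤ A + k ∫ E^{3/2}` with `A = B E(0)` and `k = C_{m₀} max(α,β) ε` is a nonlinear Gronwall
inequality. Comparison with the differential equation `dP/dt = k P^{3/2}` (`bihari`) gives
`E(t) ≤ A (1 - k √A t / 2)⁻²`, which is at most `4A` up to `T₀` and less than `4A` before. There
the embedding `‖∂_t u‖_∞ ≤ C_∞ √E` and the smallness of `E(0)` give `‖∂_t u‖_∞ < M`, so a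
continuity argument keeps `|∂_t u| ≤ M` up to `min(T, T₀)`.

The continuity argument needs that `sup_x |∂_t u(t₀, x)| < M` implies `|∂_t u| ≤ M` on all of space
for a short time after `t₀`. The Schwartz property is only assumed for each fixed time, without
uniformity in `t`, so this does not follow from the regularity of `u` alone; it is a consequence of
finite speed of propagation (`local_continuation`). While `|∂_t u| ≤ M` the equation is hyperbolic,
and with `a = αε`, `b = βε` each derivative `ψ` of `u` solves the linear equation
`(1 - a u_t) ψ_tt - c² Δψ - b ∇u·∇ψ_t = g`, where `g` is a sum of products of derivatives of `u` whose
order does not exceed that of `∇ψ`. Its energy density `(1 - a u_t) ψ_t² + c² |∇ψ|²` (`kEn_identity`), summed over all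
derivatives of order at most `2n + 1`, satisfies a differential inequality whose constant involves
only a bound `K` for the derivatives of order at most `n + 2` (`kEN_ineq`). Integrated over cubes
around `x₀` that shrink faster than the speed of propagation, the boundary terms have a sign
(`moving_box`), and the Sobolev inequality on the cube (`sobolev_box`) recovers the bound `K`. Since
all derivatives are bounded on the slice `t = t₀`, the constants and the length of the time interval
do not depend on `x₀`.
-/

open MeasureTheory Real

noncomputable section

/-- Spatial partial derivative in direction `i`. -/
def pd {n : ℕ} (i : Fin n) (f : (Fin n → ℝ) → ℝ) : (Fin n → ℝ) → ℝ :=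
  fun x => fderiv ℝ f x (Pi.single i 1)

/-- Iterated spatial derivative `∂_{x₁}^{A₁} ⋯ ∂_{x_n}^{A_n}` along the multi-index `A`. -/
def pdMulti {n : ℕ} (A : Fin n → ℕ) (f : (Fin n → ℝ) → ℝ) : (Fin n → ℝ) → ℝ :=
  (List.finRange n).foldr (fun i g => (pd i)^[A i] g) f

/-- Squared `L²(ℝⁿ)` norm. -/
def L2sq {n : ℕ} (f : (Fin n → ℝ) → ℝ) : ℝ := ∫ x, (f x) ^ 2

/-- `L^p(ℝⁿ)` norm. -/
def LpNorm {n : ℕ} (p : ℝ) (f : (Fin n → ℝ) → ℝ) : ℝ := (∫ x, |f x| ^ p) ^ p⁻¹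

/-- `L^∞(ℝⁿ)` (sup) norm. -/
def supNorm {n : ℕ} (f : (Fin n → ℝ) → ℝ) : ℝ := ⨆ x, |f x|

/-- The finite set of spatial multi-indices of total order at most `k`. -/
def multiIdx (n k : ℕ) : Finset (Fin n → ℕ) :=
  (Fintype.piFinset fun _ : Fin n => Finset.range (k + 1)).filter fun A => (∑ i, A i) ≤ k

/-- Squared Sobolev `H^k(ℝⁿ)` norm: the sum of the squared `L²` norms of all spatial
derivatives of order at most `k`. -/
def Hsq {n : ℕ} (k : ℕ) (f : (Fin n → ℝ) → ℝ) : ℝ := ∑ A ∈ multiIdx n k, L2sq (pdMulti A f)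

/-- Squared `H^k` norm of the spatial gradient (sum over the components). -/
def gradHsq {n : ℕ} (k : ℕ) (f : (Fin n → ℝ) → ℝ) : ℝ := ∑ i, Hsq k (pd i f)

/-- Time derivative `∂_t u`. -/
def dt {n : ℕ} (u : ℝ → (Fin n → ℝ) → ℝ) : ℝ → (Fin n → ℝ) → ℝ :=
  fun t x => deriv (fun s => u s x) t

/-- Iterated time derivative `∂_t^k u`. -/
def dtIter {n : ℕ} (k : ℕ) (u : ℝ → (Fin n → ℝ) → ℝ) : ℝ → (Fin n → ℝ) → ℝ :=
  fun t x => iteratedDeriv k (fun s => u s x) t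

/-- Spatial Laplacian `Δu`. -/
def lap {n : ℕ} (u : ℝ → (Fin n → ℝ) → ℝ) : ℝ → (Fin n → ℝ) → ℝ :=
  fun t x => ∑ i, pd i (pd i (u t)) x

/-- Euclidean inner product of the spatial gradients, `∇u · ∇v`. -/
def gradDot {n : ℕ} (u v : ℝ → (Fin n → ℝ) → ℝ) : ℝ → (Fin n → ℝ) → ℝ :=
  fun t x => ∑ i, pd i (u t) x * pd i (v t) x

/-- Squared norm of the spatial gradient, `|∇u|²`. -/
def gradSq {n : ℕ} (u : ℝ → (Fin n → ℝ) → ℝ) : ℝ → (Fin n → ℝ) → ℝ :=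
  fun t x => ∑ i, (pd i (u t) x) ^ 2

/-- A function on `ℝⁿ` is Schwartz if it underlies a `SchwartzMap`. -/
def IsSchwartz {n : ℕ} (f : (Fin n → ℝ) → ℝ) : Prop :=
  ∃ g : SchwartzMap (Fin n → ℝ) ℝ, ⇑g = f

/-- A space-time function is smooth spatially-Schwartz if it is jointly smooth and all its
time derivatives `∂_t^k u (t, ·)` are Schwartz functions of the space variable. -/
def SmoothSchwartz {n : ℕ} (u : ℝ → (Fin n → ℝ) → ℝ) : Prop :=
  ContDiff ℝ (⊤ : ℕ∞) (fun p : ℝ × (Fin n → ℝ) => u p.1 p.2) ∧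
  ∀ (k : ℕ) (t : ℝ), IsSchwartz fun x => dtIter k u t x

/-- The energy `E_m[u](t)` for the inviscid Kuznetsov equation. -/
def Em {n : ℕ} (m : ℕ) (u : ℝ → (Fin n → ℝ) → ℝ) (t : ℝ) : ℝ :=
  gradHsq m (u t) + ∑ i ∈ Finset.Icc 1 (m + 1), Hsq (m + 1 - i) fun x => dtIter i u t x

/-- The inviscid Kuznetsov equation at time `t`. -/
def InviscidKuznetsov {n : ℕ} (c α β ε : ℝ) (u : ℝ → (Fin n → ℝ) → ℝ) (t : ℝ) : Prop :=
  ∀ x, dtIter 2 u t x - c ^ 2 * lap u t x =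
    α * ε * dt u t x * dtIter 2 u t x + β * ε * gradDot u (dt u) t x

/-! ### Space-time calculus and the energy identity -/

/-- The coordinate direction in space-time `ℝ × ℝⁿ`: `none` is time, `some i` the `i`-th spatial
coordinate. -/
def kdir {n : ℕ} : Option (Fin n) → ℝ × (Fin n → ℝ)
  | none => (1, 0)
  | some i => (0, Pi.single i 1)

/-- The partial derivative of a function on space-time. -/
def kpd {n : ℕ} (j : Option (Fin n)) (f : ℝ × (Fin n → ℝ) → ℝ) : ℝ × (Fin n → ℝ) → ℝ :=
  fun z => fderiv ℝ f z (kdir j)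

/-- The iterated space-time derivative along a word of directions, the head acting last. -/
def kD {n : ℕ} (f : ℝ × (Fin n → ℝ) → ℝ) : List (Option (Fin n)) → ℝ × (Fin n → ℝ) → ℝ
  | [] => f
  | j :: w => kpd j (kD f w)

section calculus

variable {n : ℕ} {f g : ℝ × (Fin n → ℝ) → ℝ}

lemma kpd_smooth (hf : ContDiff ℝ (⊤ : ℕ∞) f) (j : Option (Fin n)) :
    ContDiff ℝ (⊤ : ℕ∞) (kpd j f) := by
  unfold kpd
  exact (hf.fderiv_right (m := (⊤ : ℕ∞)) (by exact le_rfl)).clm_apply contDiff_const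

lemma kD_smooth (hf : ContDiff ℝ (⊤ : ℕ∞) f) (w : List (Option (Fin n))) :
    ContDiff ℝ (⊤ : ℕ∞) (kD f w) := by
  induction w with
  | nil => exact hf
  | cons j w ih => exact kpd_smooth ih j

lemma smooth_diff (hf : ContDiff ℝ (⊤ : ℕ∞) f) : Differentiable ℝ f :=
  hf.differentiable (by simp)

lemma kpd_comm (hf : ContDiff ℝ (⊤ : ℕ∞) f) (j k : Option (Fin n)) :
    kpd j (kpd k f) = kpd k (kpd j f) := by
  have hd : Differentiable ℝ (fderiv ℝ f) :=
    (hf.fderiv_right (m := (⊤ : ℕ∞)) (by exact le_rfl)).differentiable (by simp)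
  have key : ∀ (a b : Option (Fin n)) z,
      kpd a (kpd b f) z = fderiv ℝ (fderiv ℝ f) z (kdir a) (kdir b) := by
    intro a b z
    unfold kpd
    rw [fderiv_clm_apply (hd z) (differentiableAt_const _)]
    simp
  funext z
  rw [key, key]
  exact (hf.contDiffAt.isSymmSndFDerivAt (by simp; exact WithTop.coe_le_coe.2 le_top)) _ _

lemma kpd_add (hf : Differentiable ℝ f) (hg : Differentiable ℝ g) (j : Option (Fin n)) :
    kpd j (fun z => f z + g z) = fun z => kpd j f z + kpd j g z := by
  funext z
  unfold kpd
  rw [fderiv_fun_add (hf z) (hg z)]; rfl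

lemma kpd_sub (hf : Differentiable ℝ f) (hg : Differentiable ℝ g) (j : Option (Fin n)) :
    kpd j (fun z => f z - g z) = fun z => kpd j f z - kpd j g z := by
  funext z
  unfold kpd
  rw [fderiv_fun_sub (hf z) (hg z)]; rfl

lemma kpd_mul (hf : Differentiable ℝ f) (hg : Differentiable ℝ g) (j : Option (Fin n)) :
    kpd j (fun z => f z * g z) = fun z => f z * kpd j g z + g z * kpd j f z := by
  funext z
  unfold kpd
  rw [fderiv_fun_mul (hf z) (hg z)]; rfl

lemma kpd_const_mul (hf : Differentiable ℝ f) (c : ℝ) (j : Option (Fin n)) :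
    kpd j (fun z => c * f z) = fun z => c * kpd j f z := by
  funext z
  unfold kpd
  rw [fderiv_const_mul (hf z)]; rfl

lemma kpd_sum {ι : Type*} (s : Finset ι) {F : ι → ℝ × (Fin n → ℝ) → ℝ}
    (hF : ∀ i ∈ s, Differentiable ℝ (F i)) (j : Option (Fin n)) :
    kpd j (fun z => ∑ i ∈ s, F i z) = fun z => ∑ i ∈ s, kpd j (F i) z := by
  funext z
  unfold kpd
  rw [fderiv_fun_sum (fun i hi => hF i hi z)]
  simp

lemma kpd_const (c : ℝ) (j : Option (Fin n)) : kpd j (fun _ => c) = fun _ => 0 := by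
  funext z; unfold kpd; simp

/-- The Kuznetsov operator with coefficients frozen at `f`, applied to `ψ`; the equation for `f`
is `kR a b c f f = 0`. -/
def kR (a b c : ℝ) (f ψ : ℝ × (Fin n → ℝ) → ℝ) (z : ℝ × (Fin n → ℝ)) : ℝ :=
  (1 - a * kpd none f z) * kpd none (kpd none ψ) z
    - c ^ 2 * ∑ i : Fin n, kpd (some i) (kpd (some i) ψ) z
    - b * ∑ i : Fin n, kpd (some i) f z * kpd (some i) (kpd none ψ) z

/-- Twice the energy density of `ψ` relative to the background `f`. -/
def kEn (a c : ℝ) (f ψ : ℝ × (Fin n → ℝ) → ℝ) (z : ℝ × (Fin n → ℝ)) : ℝ :=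
  (1 - a * kpd none f z) * (kpd none ψ z * kpd none ψ z)
    + c ^ 2 * ∑ i : Fin n, kpd (some i) ψ z * kpd (some i) ψ z

/-- The energy flux belonging to `kEn`. -/
def kFl (b c : ℝ) (f ψ : ℝ × (Fin n → ℝ) → ℝ) (i : Fin n) (z : ℝ × (Fin n → ℝ)) : ℝ :=
  2 * c ^ 2 * (kpd none ψ z * kpd (some i) ψ z)
    + b * (kpd (some i) f z * (kpd none ψ z * kpd none ψ z))

variable {ψ : ℝ × (Fin n → ℝ) → ℝ}

lemma kEn_smooth (hf : ContDiff ℝ (⊤ : ℕ∞) f) (hψ : ContDiff ℝ (⊤ : ℕ∞) ψ) (a c : ℝ) :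
    ContDiff ℝ (⊤ : ℕ∞) (kEn a c f ψ) := by
  have h1 := fun j => kpd_smooth hf j
  have h2 := fun j => kpd_smooth hψ j
  unfold kEn
  exact ((contDiff_const.sub (contDiff_const.mul (h1 _))).mul ((h2 _).mul (h2 _))).add
    (contDiff_const.mul (ContDiff.sum fun i _ => (h2 _).mul (h2 _)))

lemma kFl_smooth (hf : ContDiff ℝ (⊤ : ℕ∞) f) (hψ : ContDiff ℝ (⊤ : ℕ∞) ψ) (b c : ℝ)
    (i : Fin n) : ContDiff ℝ (⊤ : ℕ∞) (kFl b c f ψ i) := by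
  have h1 := fun j => kpd_smooth hf j
  have h2 := fun j => kpd_smooth hψ j
  unfold kFl
  exact (contDiff_const.mul ((h2 _).mul (h2 _))).add
    (contDiff_const.mul ((h1 _).mul ((h2 _).mul (h2 _))))

/-- The energy identity; it holds for arbitrary smooth `f` and `ψ`. -/
lemma kEn_identity (hf : ContDiff ℝ (⊤ : ℕ∞) f) (hψ : ContDiff ℝ (⊤ : ℕ∞) ψ) (a b c : ℝ)
    (z : ℝ × (Fin n → ℝ)) :
    kpd none (kEn a c f ψ) z - ∑ i, kpd (some i) (kFl b c f ψ i) z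
      = 2 * kR a b c f ψ z * kpd none ψ z
        - (a * kpd none (kpd none f) z + b * ∑ i : Fin n, kpd (some i) (kpd (some i) f) z)
          * (kpd none ψ z * kpd none ψ z) := by
  have h1 := fun j => smooth_diff (kpd_smooth hf j)
  have h2 := fun j => smooth_diff (kpd_smooth hψ j)
  have e1 : kpd none (kEn a c f ψ) z =
      (1 - a * kpd none f z) * (2 * kpd none ψ z * kpd none (kpd none ψ) z)
      - a * kpd none (kpd none f) z * (kpd none ψ z * kpd none ψ z)
      + c ^ 2 * ∑ i : Fin n, 2 * kpd (some i) ψ z * kpd (some i) (kpd none ψ) z := by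
    unfold kEn
    rw [kpd_add (((differentiable_const _).fun_sub ((h1 _).const_mul _)).fun_mul ((h2 _).fun_mul (h2 _)))
      ((Differentiable.fun_sum fun i _ => (h2 _).fun_mul (h2 _)).const_mul _),
      kpd_mul ((differentiable_const _).fun_sub ((h1 _).const_mul _)) ((h2 _).fun_mul (h2 _)),
      kpd_sub (differentiable_const _) ((h1 _).const_mul _), kpd_const_mul (h1 _),
      kpd_const_mul (Differentiable.fun_sum fun i _ => (h2 _).fun_mul (h2 _)),
      kpd_sum _ (fun i _ => (h2 _).fun_mul (h2 _)), kpd_const, kpd_mul (h2 _) (h2 _)]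
    have : ∀ i : Fin n, kpd none (fun z => kpd (some i) ψ z * kpd (some i) ψ z) z =
        2 * kpd (some i) ψ z * kpd (some i) (kpd none ψ) z := by
      intro i
      rw [kpd_mul (h2 _) (h2 _), kpd_comm hψ none (some i)]
      ring
    simp only [this]
    ring
  have e2 : ∀ i, kpd (some i) (kFl b c f ψ i) z =
      2 * c ^ 2 * (kpd none ψ z * kpd (some i) (kpd (some i) ψ) z
        + kpd (some i) ψ z * kpd (some i) (kpd none ψ) z)
      + b * (kpd (some i) f z * (2 * kpd none ψ z * kpd (some i) (kpd none ψ) z)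
        + kpd (some i) (kpd (some i) f) z * (kpd none ψ z * kpd none ψ z)) := by
    intro i
    unfold kFl
    rw [kpd_add (((h2 _).fun_mul (h2 _)).const_mul _)
        (((h1 _).fun_mul ((h2 _).fun_mul (h2 _))).const_mul _),
      kpd_const_mul ((h2 _).fun_mul (h2 _)), kpd_const_mul ((h1 _).fun_mul ((h2 _).fun_mul (h2 _))),
      kpd_mul (h2 _) (h2 _), kpd_mul (h1 _) ((h2 _).fun_mul (h2 _)), kpd_mul (h2 _) (h2 _)]
    ring
  rw [e1]
  simp only [e2]
  unfold kR
  simp only [Finset.sum_add_distrib, ← Finset.mul_sum, mul_add, ← Finset.sum_mul, mul_sub]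
  have s1 : ∀ i : Fin n, 2 * kpd (some i) ψ z * kpd (some i) (kpd none ψ) z
      = 2 * (kpd (some i) ψ z * kpd (some i) (kpd none ψ) z) := fun i => by ring
  have s2 : ∀ i : Fin n, kpd (some i) f z * (2 * kpd none ψ z * kpd (some i) (kpd none ψ) z)
      = 2 * kpd none ψ z * (kpd (some i) f z * kpd (some i) (kpd none ψ) z) :=
    fun i => by ring
  simp only [s1, s2, ← Finset.mul_sum]
  ring

lemma kpd_kR (hf : ContDiff ℝ (⊤ : ℕ∞) f) (hψ : ContDiff ℝ (⊤ : ℕ∞) ψ) (a b c : ℝ)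
    (j : Option (Fin n)) (z : ℝ × (Fin n → ℝ)) :
    kR a b c f (kpd j ψ) z = kpd j (kR a b c f ψ) z
      + (a * (kpd j (kpd none f) z * kpd none (kpd none ψ) z)
      + b * ∑ i : Fin n, kpd j (kpd (some i) f) z * kpd (some i) (kpd none ψ) z) := by
  have h1 := fun j => smooth_diff (kpd_smooth hf j)
  have h2 := fun j k => smooth_diff (kpd_smooth (kpd_smooth hψ j) k)
  have c2 : ∀ k l, kpd j (kpd k (kpd l ψ)) = kpd k (kpd l (kpd j ψ)) := by
    intro k l
    rw [kpd_comm (kpd_smooth hψ l) j k, kpd_comm hψ j l]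
  have e : kpd j (kR a b c f ψ) z =
      (1 - a * kpd none f z) * kpd j (kpd none (kpd none ψ)) z
      - a * kpd j (kpd none f) z * kpd none (kpd none ψ) z
      - c ^ 2 * ∑ i : Fin n, kpd j (kpd (some i) (kpd (some i) ψ)) z
      - b * ∑ i : Fin n, (kpd (some i) f z * kpd j (kpd (some i) (kpd none ψ)) z
        + kpd (some i) (kpd none ψ) z * kpd j (kpd (some i) f) z) := by
    unfold kR
    rw [kpd_sub ((((differentiable_const _).fun_sub ((h1 _).const_mul _)).fun_mul (h2 _ _)).fun_sub
        ((Differentiable.fun_sum fun i _ => h2 _ _).const_mul _))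
        ((Differentiable.fun_sum fun i _ => (h1 _).fun_mul (h2 _ _)).const_mul _),
      kpd_sub (((differentiable_const _).fun_sub ((h1 _).const_mul _)).fun_mul (h2 _ _))
        ((Differentiable.fun_sum fun i _ => h2 _ _).const_mul _),
      kpd_mul ((differentiable_const _).fun_sub ((h1 _).const_mul _)) (h2 _ _),
      kpd_sub (differentiable_const _) ((h1 _).const_mul _), kpd_const_mul (h1 _),
      kpd_const_mul (Differentiable.fun_sum fun i _ => h2 _ _),
      kpd_const_mul (Differentiable.fun_sum fun i _ => (h1 _).fun_mul (h2 _ _)),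
      kpd_sum _ (fun i _ => h2 _ _), kpd_sum _ (fun i _ => (h1 _).fun_mul (h2 _ _)), kpd_const]
    have : ∀ i : Fin n, kpd j (fun z => kpd (some i) f z * kpd (some i) (kpd none ψ) z) z
        = kpd (some i) f z * kpd j (kpd (some i) (kpd none ψ)) z
        + kpd (some i) (kpd none ψ) z * kpd j (kpd (some i) f) z := by
      intro i
      rw [kpd_mul (h1 _) (h2 _ _)]
    simp only [this]
    ring
  rw [e]
  simp only [c2]
  unfold kR
  simp only [Finset.sum_add_distrib, mul_add]
  have s : ∀ i : Fin n, kpd (some i) (kpd none ψ) z * kpd j (kpd (some i) f) z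
    = kpd j (kpd (some i) f) z * kpd (some i) (kpd none ψ) z := fun i => mul_comm _ _
  simp only [s]
  ring

end calculus

/-! ### Commutators and the total energy -/

section commutator

variable {n : ℕ} {f : ℝ × (Fin n → ℝ) → ℝ}

/-- The span of the products `∂^{w₁} f · ∂^{w₂} f` with `|w₁|, |w₂| ≥ 2` and
`|w₁| + |w₂| = l + 3`: the possible commutator terms of order `l`. -/
def kP (f : ℝ × (Fin n → ℝ) → ℝ) (l : ℕ) : Submodule ℝ (ℝ × (Fin n → ℝ) → ℝ) :=
  Submodule.span ℝ {h | ∃ w₁ w₂ : List (Option (Fin n)), 2 ≤ w₁.length ∧ 2 ≤ w₂.length ∧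
    w₁.length + w₂.length = l + 3 ∧ h = fun z => kD f w₁ z * kD f w₂ z}

lemma kP_prod {l : ℕ} (w₁ w₂ : List (Option (Fin n))) (h1 : 2 ≤ w₁.length)
    (h2 : 2 ≤ w₂.length) (h : w₁.length + w₂.length = l + 3) :
    (fun z => kD f w₁ z * kD f w₂ z) ∈ kP f l :=
  Submodule.subset_span ⟨w₁, w₂, h1, h2, h, rfl⟩

lemma kP_deriv (hf : ContDiff ℝ (⊤ : ℕ∞) f) (l : ℕ) (j : Option (Fin n))
    (g : ℝ × (Fin n → ℝ) → ℝ) (hg : g ∈ kP f l) :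
    ContDiff ℝ (⊤ : ℕ∞) g ∧ kpd j g ∈ kP f (l + 1) := by
  unfold kP at hg
  induction hg using Submodule.span_induction with
  | mem x hx =>
    obtain ⟨w₁, w₂, h1, h2, h, rfl⟩ := hx
    refine ⟨(kD_smooth hf _).mul (kD_smooth hf _), ?_⟩
    rw [kpd_mul (smooth_diff (kD_smooth hf _)) (smooth_diff (kD_smooth hf _))]
    have e1 := kP_prod (f := f) (l := l + 1) w₁ (j :: w₂) h1 (by simp; omega) (by simp; omega)
    have e2 := kP_prod (f := f) (l := l + 1) w₂ (j :: w₁) h2 (by simp; omega) (by simp; omega)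
    exact (kP f (l + 1)).add_mem e1 e2
  | zero =>
    refine ⟨contDiff_const, ?_⟩
    have : kpd j (0 : ℝ × (Fin n → ℝ) → ℝ) = 0 := kpd_const 0 j
    rw [this]
    exact Submodule.zero_mem _
  | add x y _ _ hx hy =>
    refine ⟨hx.1.add hy.1, ?_⟩
    have : kpd j (x + y) = kpd j x + kpd j y := kpd_add (smooth_diff hx.1) (smooth_diff hy.1) j
    rw [this]
    exact Submodule.add_mem _ hx.2 hy.2
  | smul a x _ hx =>
    refine ⟨hx.1.const_smul a, ?_⟩
    have : kpd j (a • x) = a • kpd j x := kpd_const_mul (smooth_diff hx.1) a j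
    rw [this]
    exact Submodule.smul_mem _ _ hx.2

/-- Differentiating the equation along a word of length `l` leaves the principal part unchanged
and produces only products of derivatives of `f` of order at most `l + 1`. -/
lemma kR_word (hf : ContDiff ℝ (⊤ : ℕ∞) f) (a b c : ℝ) {Ω : Set (ℝ × (Fin n → ℝ))}
    (hΩ : IsOpen Ω) (heq : ∀ z ∈ Ω, kR a b c f f z = 0) (w : List (Option (Fin n))) :
    ∃ g ∈ kP f w.length, ∀ z ∈ Ω, kR a b c f (kD f w) z = g z := by
  induction w with
  | nil => exact ⟨0, Submodule.zero_mem _, heq⟩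
  | cons j w ih =>
    obtain ⟨g, hg, hgz⟩ := ih
    refine ⟨fun z => kpd j g z + (a * (kD f [j, none] z * kD f (none :: none :: w) z)
      + b * ∑ i : Fin n, kD f [j, some i] z * kD f (some i :: none :: w) z), ?_, ?_⟩
    · have e1 := (kP_deriv hf _ j g hg).2
      have e2 := kP_prod (f := f) (l := w.length + 1) [j, none] (none :: none :: w)
        (by simp) (by simp) (by simp; omega)
      have e3 := fun i => kP_prod (f := f) (l := w.length + 1) [j, some i]
        (some i :: none :: w) (by simp) (by simp) (by simp; omega)
      have e4 := (kP f (w.length + 1)).add_mem e1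
        ((kP f (w.length + 1)).add_mem ((kP f (w.length + 1)).smul_mem a e2)
          ((kP f (w.length + 1)).smul_mem b
            ((kP f (w.length + 1)).sum_mem (t := Finset.univ) fun i _ => e3 i)))
      rw [List.length_cons]
      convert e4 using 1
      funext z
      simp [Finset.sum_apply]
    · intro z hz
      have h1 : kR a b c f (kD f (j :: w)) z = _ := kpd_kR hf (kD_smooth hf w) a b c j z
      rw [h1]
      have h2 : kpd j (kR a b c f (kD f w)) z = kpd j g z := by
        unfold kpd
        rw [Filter.EventuallyEq.fderiv_eq]
        filter_upwards [hΩ.mem_nhds hz] with y hy using hgz y hy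
      rw [h2]
      rfl

/-- The finite set of words of length at most `m`. -/
def kW (n m : ℕ) : Finset (List (Option (Fin n))) := (List.finite_length_le _ m).toFinset

@[simp] lemma mem_kW {m : ℕ} {w : List (Option (Fin n))} : w ∈ kW n m ↔ w.length ≤ m := by
  simp [kW]

/-- The sum of squares of all derivatives of order between `1` and `m + 1`. -/
def kV (m : ℕ) (f : ℝ × (Fin n → ℝ) → ℝ) (z : ℝ × (Fin n → ℝ)) : ℝ :=
  ∑ w ∈ kW n m, ∑ j, (kD f (j :: w) z) ^ 2

lemma kV_nonneg (m : ℕ) (z : ℝ × (Fin n → ℝ)) : 0 ≤ kV m f z :=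
  Finset.sum_nonneg fun _ _ => Finset.sum_nonneg fun _ _ => sq_nonneg _

lemma sq_le_kV {m : ℕ} (w : List (Option (Fin n))) (h1 : 1 ≤ w.length)
    (h2 : w.length ≤ m + 1) (z : ℝ × (Fin n → ℝ)) : (kD f w z) ^ 2 ≤ kV m f z := by
  cases w with
  | nil => simp at h1
  | cons j w =>
    have hw : w ∈ kW n m := by simpa using h2
    calc _ ≤ ∑ j, (kD f (j :: w) z) ^ 2 :=
          Finset.single_le_sum (f := fun j => (kD f (j :: w) z) ^ 2)
            (fun _ _ => sq_nonneg _) (Finset.mem_univ j)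
      _ ≤ _ := Finset.single_le_sum (f := fun w => ∑ j, (kD f (j :: w) z) ^ 2)
          (fun _ _ => Finset.sum_nonneg fun _ _ => sq_nonneg _) hw

lemma abs_le_sqrt_kV {m : ℕ} (w : List (Option (Fin n))) (h1 : 1 ≤ w.length)
    (h2 : w.length ≤ m + 1) (z : ℝ × (Fin n → ℝ)) : |kD f w z| ≤ √(kV m f z) := by
  rw [← Real.sqrt_sq_eq_abs]
  exact Real.sqrt_le_sqrt (sq_le_kV w h1 h2 z)

/-- In each commutator product one factor has order at most `n + 2` and the other order at most
`2n + 2`. -/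
lemma kP_bound {l : ℕ} (hl : l ≤ 2 * n + 1) (g : ℝ × (Fin n → ℝ) → ℝ) (hg : g ∈ kP f l) :
    ∃ C, 0 ≤ C ∧ ∀ z K, (∀ w : List (Option (Fin n)), 1 ≤ w.length → w.length ≤ n + 2 →
      |kD f w z| ≤ K) → |g z| ≤ C * K * √(kV (2 * n + 1) f z) := by
  unfold kP at hg
  have hK0 : ∀ z K, (∀ w : List (Option (Fin n)), 1 ≤ w.length → w.length ≤ n + 2 →
      |kD f w z| ≤ K) → 0 ≤ K := fun z K h =>
    (abs_nonneg _).trans (h [none] (by simp) (by simp))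
  induction hg using Submodule.span_induction with
  | mem x hx =>
    obtain ⟨w₁, w₂, h1, h2, h, rfl⟩ := hx
    refine ⟨1, zero_le_one, fun z K hK => ?_⟩
    have h0 := hK0 z K hK
    rw [abs_mul, one_mul]
    rcases le_total w₁.length w₂.length with h' | h'
    · exact mul_le_mul (hK w₁ (by omega) (by omega)) (abs_le_sqrt_kV w₂ (by omega) (by omega) z)
        (abs_nonneg _) h0
    · rw [mul_comm]
      exact mul_le_mul (hK w₂ (by omega) (by omega)) (abs_le_sqrt_kV w₁ (by omega) (by omega) z)
        (abs_nonneg _) h0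
  | zero =>
    exact ⟨0, le_rfl, fun z K _ => by simp⟩
  | add x y _ _ hx hy =>
    obtain ⟨C, hC, h⟩ := hx
    obtain ⟨C', hC', h'⟩ := hy
    refine ⟨C + C', add_nonneg hC hC', fun z K hK => ?_⟩
    calc |x z + y z| ≤ |x z| + |y z| := abs_add_le _ _
      _ ≤ _ := add_le_add (h z K hK) (h' z K hK)
      _ = _ := by ring
  | smul a x _ hx =>
    obtain ⟨C, hC, h⟩ := hx
    refine ⟨|a| * C, mul_nonneg (abs_nonneg _) hC, fun z K hK => ?_⟩
    calc |a * x z| = |a| * |x z| := abs_mul _ _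
      _ ≤ |a| * _ := mul_le_mul_of_nonneg_left (h z K hK) (abs_nonneg _)
      _ = _ := by ring

/-- The total energy density of order `2n + 1`. -/
def kEN (a c : ℝ) (f : ℝ × (Fin n → ℝ) → ℝ) (z : ℝ × (Fin n → ℝ)) : ℝ :=
  ∑ w ∈ kW n (2 * n + 1), kEn a c f (kD f w) z

/-- The total energy flux of order `2n + 1`. -/
def kFL (b c : ℝ) (f : ℝ × (Fin n → ℝ) → ℝ) (i : Fin n) (z : ℝ × (Fin n → ℝ)) : ℝ :=
  ∑ w ∈ kW n (2 * n + 1), kFl b c f (kD f w) i z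

lemma kEN_smooth (hf : ContDiff ℝ (⊤ : ℕ∞) f) (a c : ℝ) : ContDiff ℝ (⊤ : ℕ∞) (kEN a c f) :=
  ContDiff.sum fun _ _ => kEn_smooth hf (kD_smooth hf _) _ _

lemma kFL_smooth (hf : ContDiff ℝ (⊤ : ℕ∞) f) (b c : ℝ) (i : Fin n) :
    ContDiff ℝ (⊤ : ℕ∞) (kFL b c f i) :=
  ContDiff.sum fun _ _ => kFl_smooth hf (kD_smooth hf _) _ _ _

/-- Under hyperbolicity the energy density controls all derivatives of order `1, …, 2n + 2`. -/
lemma kV_le_kEN {a c : ℝ} (hc : 0 < c) {z : ℝ × (Fin n → ℝ)} (hh : a * kpd none f z ≤ 1 / 2) :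
    kV (2 * n + 1) f z ≤ (2 + (c ^ 2)⁻¹) * kEN a c f z := by
  unfold kV kEN
  rw [Finset.mul_sum]
  refine Finset.sum_le_sum fun w _ => ?_
  rw [Fintype.sum_option]
  set ψ := kD f w
  have hψ : ∀ j, kD f (j :: w) z = kpd j ψ z := fun _ => rfl
  simp only [hψ, kEn]
  have hs : (∑ i : Fin n, kpd (some i) ψ z ^ 2) = ∑ i : Fin n, kpd (some i) ψ z * kpd (some i) ψ z :=
    Finset.sum_congr rfl fun i _ => by ring
  rw [hs]
  set S := ∑ i : Fin n, kpd (some i) ψ z * kpd (some i) ψ z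
  have hS : 0 ≤ S := Finset.sum_nonneg fun _ _ => mul_self_nonneg _
  set p := kpd none ψ z
  have h1 : p ^ 2 ≤ 2 * ((1 - a * kpd none f z) * (p * p)) := by
    nlinarith [mul_nonneg (sub_nonneg.2 hh) (mul_self_nonneg p)]
  have h2 : S = (c ^ 2)⁻¹ * (c ^ 2 * S) := by field_simp
  have h3 : 0 ≤ (1 - a * kpd none f z) * (p * p) := by nlinarith [sq_nonneg p]
  have h4 : 0 ≤ c ^ 2 * S := by positivity
  have h5 : 0 ≤ (c ^ 2)⁻¹ := by positivity
  nlinarith [mul_nonneg h5 h3]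

lemma kFL_le {a b c K : ℝ} (hb : 0 ≤ b) (hK : 0 ≤ K) {z : ℝ × (Fin n → ℝ)}
    (hh : a * kpd none f z ≤ 1 / 2) (i : Fin n) (hKi : |kpd (some i) f z| ≤ K) :
    |kFL b c f i z| ≤ (2 * c ^ 2 + 1 + 2 * b * K) * kEN a c f z := by
  unfold kFL kEN
  refine (Finset.abs_sum_le_sum_abs _ _).trans ?_
  rw [Finset.mul_sum]
  refine Finset.sum_le_sum fun w _ => ?_
  set ψ := kD f w
  simp only [kFl, kEn]
  set p := kpd none ψ z
  set q := kpd (some i) ψ z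
  have hq : q * q ≤ ∑ i : Fin n, kpd (some i) ψ z * kpd (some i) ψ z :=
    Finset.single_le_sum (f := fun i : Fin n => kpd (some i) ψ z * kpd (some i) ψ z)
      (fun _ _ => mul_self_nonneg _) (Finset.mem_univ i)
  set S := ∑ i : Fin n, kpd (some i) ψ z * kpd (some i) ψ z
  have hq0 : 0 ≤ q * q := mul_self_nonneg q
  set A := (1 - a * kpd none f z) * (p * p)
  have hA : p * p ≤ 2 * A := by
    have := mul_nonneg (sub_nonneg.2 hh) (mul_self_nonneg p)
    simp only [A]; nlinarith
  have hp0 : 0 ≤ p * p := mul_self_nonneg p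
  have hpq : 2 * |p * q| ≤ p * p + q * q := by
    rw [abs_mul]
    nlinarith [sq_nonneg (|p| - |q|), abs_mul_abs_self p, abs_mul_abs_self q]
  have h1 : |2 * c ^ 2 * (p * q) + b * (kpd (some i) f z * (p * p))|
      ≤ c ^ 2 * (2 * |p * q|) + b * (K * (p * p)) := by
    refine (abs_add_le _ _).trans (add_le_add ?_ ?_)
    · rw [abs_mul, abs_of_nonneg (by positivity : (0 : ℝ) ≤ 2 * c ^ 2)]
      linarith
    · rw [abs_mul, abs_of_nonneg hb, abs_mul, abs_of_nonneg hp0]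
      gcongr
  have h2 : c ^ 2 * (2 * |p * q|) ≤ c ^ 2 * (p * p + q * q) := by gcongr
  have h3 : c ^ 2 * (q * q) ≤ c ^ 2 * S := by gcongr
  have h4 : c ^ 2 * (p * p) ≤ c ^ 2 * (2 * A) := by gcongr
  have h5 : b * (K * (p * p)) ≤ b * (K * (2 * A)) := by gcongr
  have h6 : 0 ≤ (2 * c ^ 2 + 2 * b * K) * (c ^ 2 * S) := by
    have : 0 ≤ S := hq0.trans hq
    positivity
  have h7 : 0 ≤ A := by linarith
  nlinarith

/-- The total energy identity with its error terms absorbed. -/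
lemma kEN_ineq (hf : ContDiff ℝ (⊤ : ℕ∞) f) {a b c : ℝ} (ha : 0 ≤ a) (hb : 0 ≤ b) (hc : 0 < c)
    {Ω : Set (ℝ × (Fin n → ℝ))}
    (hΩ : IsOpen Ω) (heq : ∀ z ∈ Ω, kR a b c f f z = 0) :
    ∃ C, 0 ≤ C ∧ ∀ z ∈ Ω, ∀ K, a * kpd none f z ≤ 1 / 2 →
      (∀ w : List (Option (Fin n)), 1 ≤ w.length → w.length ≤ n + 2 → |kD f w z| ≤ K) →
      kpd none (kEN a c f) z - ∑ i, kpd (some i) (kFL b c f i) z ≤ C * K * kEN a c f z := by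
  have h := fun w : List (Option (Fin n)) => kR_word hf a b c hΩ heq w
  choose g hg hgz using h
  have h2 := fun (w : List (Option (Fin n))) (hw : w.length ≤ 2 * n + 1) =>
    kP_bound hw (g w) (hg w)
  choose! D hD hDz using h2
  set c₀ : ℝ := 2 + (c ^ 2)⁻¹
  have hc₀ : 0 ≤ c₀ := by positivity
  refine ⟨∑ w ∈ kW n (2 * n + 1), (2 * D w + (a + b * n)) * c₀, ?_, ?_⟩
  · refine Finset.sum_nonneg fun w hw => ?_
    have := hD w (by simpa using hw)
    positivity
  intro z hz K hh hK
  have hK0 : 0 ≤ K := (abs_nonneg _).trans (hK [none] (by simp) (by simp))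
  have e1 : kpd none (kEN a c f) z = ∑ w ∈ kW n (2 * n + 1), kpd none (kEn a c f (kD f w)) z := by
    unfold kEN
    rw [kpd_sum _ fun w _ => smooth_diff (kEn_smooth hf (kD_smooth hf w) a c)]
  have e2 : ∀ i, kpd (some i) (kFL b c f i) z
      = ∑ w ∈ kW n (2 * n + 1), kpd (some i) (kFl b c f (kD f w) i) z := by
    intro i
    unfold kFL
    rw [kpd_sum _ fun w _ => smooth_diff (kFl_smooth hf (kD_smooth hf w) b c i)]
  rw [e1, Finset.sum_congr rfl fun i _ => e2 i, Finset.sum_comm, ← Finset.sum_sub_distrib]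
  have hV := kV_le_kEN (n := n) (f := f) hc hh
  have hV0 := kV_nonneg (f := f) (2 * n + 1) z
  rw [mul_assoc, Finset.sum_mul]
  refine Finset.sum_le_sum fun w hw => ?_
  have hw' : w.length ≤ 2 * n + 1 := by simpa using hw
  rw [kEn_identity hf (kD_smooth hf w), hgz w z hz]
  set V := kV (2 * n + 1) f z
  have hp := abs_le_sqrt_kV (f := f) (m := 2 * n + 1) (none :: w) (by simp)
    (by simpa using hw') z
  change |kpd none (kD f w) z| ≤ √V at hp
  set p := kpd none (kD f w) z
  have hg1 := hDz w hw' z K hK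
  have hss : √V * √V = V := Real.mul_self_sqrt hV0
  have t1 : 2 * g w z * p ≤ 2 * D w * K * V := by
    calc 2 * g w z * p ≤ |2 * g w z * p| := le_abs_self _
      _ = 2 * (|g w z| * |p|) := by rw [abs_mul, abs_mul]; simp; ring
      _ ≤ 2 * ((D w * K * √V) * √V) := by
        have : 0 ≤ D w * K * √V := (abs_nonneg _).trans hg1
        gcongr
      _ = 2 * D w * K * (√V * √V) := by ring
      _ = _ := by rw [hss]
  have hpp : p * p ≤ V := by
    rw [← abs_mul_abs_self, ← hss]
    gcongr
  have hpp0 : 0 ≤ p * p := mul_self_nonneg p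
  have k1 : -K ≤ kpd none (kpd none f) z := (abs_le.1 (hK [none, none] (by simp) (by simp))).1
  have k2 : -(n * K) ≤ ∑ i : Fin n, kpd (some i) (kpd (some i) f) z := by
    have : ∑ i : Fin n, -K ≤ ∑ i : Fin n, kpd (some i) (kpd (some i) f) z :=
      Finset.sum_le_sum fun i _ => (abs_le.1 (hK [some i, some i] (by simp) (by simp))).1
    simpa using this
  have t2 : -((a + b * n) * K) ≤ a * kpd none (kpd none f) z
      + b * ∑ i : Fin n, kpd (some i) (kpd (some i) f) z := by
    have := mul_le_mul_of_nonneg_left k1 ha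
    have := mul_le_mul_of_nonneg_left k2 hb
    linarith
  have t3 : -((a * kpd none (kpd none f) z
      + b * ∑ i : Fin n, kpd (some i) (kpd (some i) f) z) * (p * p)) ≤ (a + b * n) * K * V := by
    have h1 := mul_le_mul_of_nonneg_right t2 hpp0
    have h2 : (a + b * n) * K * (p * p) ≤ (a + b * n) * K * V :=
      mul_le_mul_of_nonneg_left hpp (by positivity)
    linarith
  have hDw := hD w hw'
  calc _ ≤ (2 * D w + (a + b * n)) * K * V := by linarith
    _ ≤ (2 * D w + (a + b * n)) * K * (c₀ * kEN a c f z) := by gcongr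
    _ = _ := by ring

end commutator

/-! ### Energy on shrinking cubes -/

section box

variable {n : ℕ}

/-- The parametrization of the shrinking space-time tube around `x₀` by the fixed cube
`[-1, 1]ⁿ`: at time `t` the cube has half side `2 - L (t - t₀)`. -/
def kp (x₀ : Fin n → ℝ) (t₀ L t : ℝ) (y : Fin n → ℝ) : ℝ × (Fin n → ℝ) :=
  (t, x₀ + (2 - L * (t - t₀)) • y)

lemma kp_smooth (x₀ : Fin n → ℝ) (t₀ L : ℝ) :
    ContDiff ℝ (⊤ : ℕ∞) (fun q : ℝ × (Fin n → ℝ) => kp x₀ t₀ L q.1 q.2) := by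
  unfold kp
  fun_prop

lemma fderiv_kdir (E : ℝ × (Fin n → ℝ) → ℝ) (z : ℝ × (Fin n → ℝ)) (s : ℝ) (v : Fin n → ℝ) :
    fderiv ℝ E z (s, v) = s * kpd none E z + ∑ i, v i * kpd (some i) E z := by
  have : ((s, v) : ℝ × (Fin n → ℝ)) = s • kdir none + ∑ i, v i • kdir (some i) := by
    simp only [kdir]
    ext i
    · simp [Prod.fst_sum]
    · simp [Prod.snd_sum, Finset.sum_apply, Pi.single_apply]
  rw [this, map_add, map_smul, map_sum]
  simp [kpd]

lemma deriv_under_box (G : ℝ × (Fin n → ℝ) → ℝ) (hG : ContDiff ℝ (⊤ : ℕ∞) G) (t : ℝ) :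
    HasDerivAt (fun t => ∫ y in Set.Icc (-1 : Fin n → ℝ) 1, G (t, y))
      (∫ y in Set.Icc (-1 : Fin n → ℝ) 1, kpd none G (t, y)) t := by
  have hc : Continuous (kpd none G) := (kpd_smooth hG none).continuous
  obtain ⟨C, hC⟩ := ((isCompact_closedBall t 1).prod
    (isCompact_Icc (a := (-1 : Fin n → ℝ)) (b := 1))).exists_bound_of_continuousOn hc.continuousOn
  refine (hasDerivAt_integral_of_dominated_loc_of_deriv_le (F := fun t y => G (t, y))
    (F' := fun t y => kpd none G (t, y)) (bound := fun _ => C)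
    (Metric.closedBall_mem_nhds t one_pos) ?_ ?_ ?_ ?_ ?_ ?_).2
  · exact Filter.Eventually.of_forall fun s =>
      (hG.continuous.comp (by fun_prop : Continuous fun y : Fin n → ℝ => (s, y))).aestronglyMeasurable
  · exact (hG.continuous.comp
      (by fun_prop : Continuous fun y : Fin n → ℝ => (t, y))).continuousOn.integrableOn_Icc
  · exact (hc.comp (by fun_prop : Continuous fun y : Fin n → ℝ => (t, y))).aestronglyMeasurable
  · refine (ae_restrict_iff' measurableSet_Icc).2 (Filter.Eventually.of_forall fun y hy s hs => ?_)
    exact hC (s, y) ⟨hs, hy⟩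
  · exact integrableOn_const (by exact isCompact_Icc.measure_lt_top.ne)
  · refine Filter.Eventually.of_forall fun y s _ => ?_
    have h1 := (smooth_diff hG (s, y)).hasFDerivAt
    have h2 : HasDerivAt (fun s : ℝ => (s, y)) ((1 : ℝ), (0 : Fin n → ℝ)) s :=
      (hasDerivAt_id s).prodMk (hasDerivAt_const s y)
    exact h1.comp_hasDerivAt s h2

/-- Divergence theorem on the cube for a field that points inwards at the boundary. -/
lemma div_box_nonpos (hn : 1 ≤ n) (G : Fin n → (Fin n → ℝ) → ℝ)
    (hG : ∀ i, ContDiff ℝ (⊤ : ℕ∞) (G i))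
    (h1 : ∀ i, ∀ y ∈ Set.Icc (-1 : Fin n → ℝ) 1, y i = 1 → G i y ≤ 0)
    (h2 : ∀ i, ∀ y ∈ Set.Icc (-1 : Fin n → ℝ) 1, y i = -1 → 0 ≤ G i y) :
    ∫ y in Set.Icc (-1 : Fin n → ℝ) 1, ∑ i, fderiv ℝ (G i) y (Pi.single i 1) ≤ 0 := by
  obtain ⟨k, rfl⟩ : ∃ k, n = k + 1 := ⟨n - 1, by omega⟩
  have hle : (-1 : Fin (k + 1) → ℝ) ≤ 1 := fun i => by simp
  rw [integral_divergence_of_hasFDerivAt_off_countable' (-1) 1 hle G (fun i y => fderiv ℝ (G i) y)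
    ∅ Set.countable_empty (fun i => (hG i).continuous.continuousOn)
    (fun x _ i => ((hG i).differentiable (by simp) x).hasFDerivAt)]
  · refine Finset.sum_nonpos fun i _ => ?_
    have m : ∀ (s : ℝ) (hs : s = 1 ∨ s = -1) (y : Fin k → ℝ),
        y ∈ Set.Icc ((-1 : Fin (k + 1) → ℝ) ∘ i.succAbove) ((1 : Fin (k + 1) → ℝ) ∘ i.succAbove) →
        (i.insertNth s y : Fin (k + 1) → ℝ) ∈ Set.Icc (-1 : Fin (k + 1) → ℝ) 1 := by
      intro s hs y hy
      rw [Fin.insertNth_mem_Icc]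
      refine ⟨?_, hy⟩
      rcases hs with rfl | rfl <;> simp
    have e1 : ∫ y in Set.Icc ((-1 : Fin (k + 1) → ℝ) ∘ i.succAbove)
        ((1 : Fin (k + 1) → ℝ) ∘ i.succAbove), G i (i.insertNth 1 y) ≤ 0 :=
      setIntegral_nonpos measurableSet_Icc fun y hy =>
        h1 i _ (m 1 (Or.inl rfl) y hy) (by simp)
    have e2 : 0 ≤ ∫ y in Set.Icc ((-1 : Fin (k + 1) → ℝ) ∘ i.succAbove)
        ((1 : Fin (k + 1) → ℝ) ∘ i.succAbove), G i (i.insertNth (-1) y) :=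
      setIntegral_nonneg measurableSet_Icc fun y hy =>
        h2 i _ (m (-1) (Or.inr rfl) y hy) (by simp)
    exact sub_nonpos.2 (e1.trans e2)
  · refine Continuous.integrableOn_Icc ?_
    refine continuous_finsetSum _ fun i _ => ?_
    exact ((hG i).continuous_fderiv (by simp)).clm_apply continuous_const

/-- Finite speed of propagation: if the flux is dominated by `L` times the energy density then the
energy in a cube shrinking with speed `L` grows at most exponentially. -/
lemma moving_box (hn : 1 ≤ n) (E : ℝ × (Fin n → ℝ) → ℝ) (F : Fin n → ℝ × (Fin n → ℝ) → ℝ)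
    (hE : ContDiff ℝ (⊤ : ℕ∞) E) (hF : ∀ i, ContDiff ℝ (⊤ : ℕ∞) (F i))
    (x₀ : Fin n → ℝ) (t₀ t₁ L C : ℝ) (hL : 0 < L) (h01 : t₀ ≤ t₁) (hL1 : L * (t₁ - t₀) ≤ 1)
    (h1 : ∀ t ∈ Set.Ioo t₀ t₁, ∀ y ∈ Set.Icc (-1 : Fin n → ℝ) 1, ∀ i,
      |F i (kp x₀ t₀ L t y)| ≤ L * E (kp x₀ t₀ L t y))
    (h2 : ∀ t ∈ Set.Ioo t₀ t₁, ∀ y ∈ Set.Icc (-1 : Fin n → ℝ) 1,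
      kpd none E (kp x₀ t₀ L t y) - ∑ i, kpd (some i) (F i) (kp x₀ t₀ L t y)
        ≤ C * E (kp x₀ t₀ L t y)) :
    ∫ y in Set.Icc (-1 : Fin n → ℝ) 1, E (kp x₀ t₀ L t₁ y) ≤
      exp ((C + n * L) * (t₁ - t₀)) * ∫ y in Set.Icc (-1 : Fin n → ℝ) 1, E (kp x₀ t₀ L t₀ y) := by
  set G : ℝ × (Fin n → ℝ) → ℝ := fun q => E (kp x₀ t₀ L q.1 q.2) with hGdef
  have hG : ContDiff ℝ (⊤ : ℕ∞) G := hE.comp (kp_smooth x₀ t₀ L)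
  set Q : ℝ → ℝ := fun t => ∫ y in Set.Icc (-1 : Fin n → ℝ) 1, E (kp x₀ t₀ L t y) with hQdef
  have hQ : ∀ t, HasDerivAt Q (∫ y in Set.Icc (-1 : Fin n → ℝ) 1, kpd none G (t, y)) t :=
    fun t => deriv_under_box G hG t
  have hGt : ∀ t y, kpd none G (t, y) = kpd none E (kp x₀ t₀ L t y)
      - L * ∑ i, y i * kpd (some i) E (kp x₀ t₀ L t y) := by
    intro t y
    have d1 := (smooth_diff hG (t, y)).hasFDerivAt
    have d2 : HasDerivAt (fun s : ℝ => (s, y)) ((1 : ℝ), (0 : Fin n → ℝ)) t :=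
      (hasDerivAt_id t).prodMk (hasDerivAt_const t y)
    have d3 : HasDerivAt (G ∘ fun s : ℝ => (s, y)) (kpd none G (t, y)) t := d1.comp_hasDerivAt t d2
    have d4 : HasDerivAt (fun s => kp x₀ t₀ L s y) ((1 : ℝ), (-L) • y) t := by
      refine (hasDerivAt_id t).prodMk ?_
      have : HasDerivAt (fun s : ℝ => 2 - L * (s - t₀)) (-L) t := by
        simpa using (((hasDerivAt_id t).sub_const t₀).const_mul L).const_sub 2
      simpa using (this.smul_const y).const_add x₀
    have d5 := (smooth_diff hE (kp x₀ t₀ L t y)).hasFDerivAt.comp_hasDerivAt t d4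
    have d6 := d3.unique d5
    rw [d6, fderiv_kdir]
    simp only [Pi.smul_apply, smul_eq_mul, one_mul, Finset.mul_sum]
    rw [sub_eq_add_neg, ← Finset.sum_neg_distrib]
    congr 1
    exact Finset.sum_congr rfl fun i _ => by ring
  have hQ' : ∀ t ∈ Set.Ioo t₀ t₁, (∫ y in Set.Icc (-1 : Fin n → ℝ) 1, kpd none G (t, y))
      ≤ (C + n * L) * Q t := by
    intro t ht
    set r : ℝ := 2 - L * (t - t₀) with hr
    have hr1 : 1 ≤ r := by
      have : L * (t - t₀) ≤ L * (t₁ - t₀) := by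
        have := ht.2
        gcongr
      linarith
    have hkp : ∀ y, kp x₀ t₀ L t y = (t, x₀ + r • y) := fun y => rfl
    have hmap : ContDiff ℝ (⊤ : ℕ∞) (fun y : Fin n → ℝ => kp x₀ t₀ L t y) :=
      (kp_smooth x₀ t₀ L).comp (by fun_prop : ContDiff ℝ (⊤ : ℕ∞) fun y : Fin n → ℝ => (t, y))
    have hmapd : ∀ y (H : ℝ × (Fin n → ℝ) → ℝ), ContDiff ℝ (⊤ : ℕ∞) H → ∀ i,
        fderiv ℝ (fun y => H (kp x₀ t₀ L t y)) y (Pi.single i 1)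
          = r * kpd (some i) H (kp x₀ t₀ L t y) := by
      intro y H hH i
      have e1 : HasFDerivAt (fun y : Fin n → ℝ => kp x₀ t₀ L t y)
          ((0 : (Fin n → ℝ) →L[ℝ] ℝ).prod (r • ContinuousLinearMap.id ℝ (Fin n → ℝ))) y := by
        refine (hasFDerivAt_const t y).prodMk ?_
        exact ((hasFDerivAt_id y).const_smul r).const_add x₀
      have e2 := ((smooth_diff hH (kp x₀ t₀ L t y)).hasFDerivAt.comp y e1).fderiv
      have e3 : (fun y => H (kp x₀ t₀ L t y)) = H ∘ fun y => kp x₀ t₀ L t y := rfl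
      rw [e3, e2]
      have e4 : (((0 : (Fin n → ℝ) →L[ℝ] ℝ).prod (r • ContinuousLinearMap.id ℝ (Fin n → ℝ)))
          (Pi.single i 1)) = r • kdir (some i) := by
        simp [kdir]
      rw [ContinuousLinearMap.comp_apply, e4, map_smul]
      rfl
    -- The flux in the coordinates of the cube, including the contribution of the moving boundary.
    set W : Fin n → (Fin n → ℝ) → ℝ := fun i y =>
      r⁻¹ * (F i (kp x₀ t₀ L t y) - L * (y i * E (kp x₀ t₀ L t y))) with hW
    have hFk : ∀ i, ContDiff ℝ (⊤ : ℕ∞) fun y => F i (kp x₀ t₀ L t y) := fun i => (hF i).comp hmap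
    have hEk : ContDiff ℝ (⊤ : ℕ∞) fun y => E (kp x₀ t₀ L t y) := hE.comp hmap
    have hWs : ∀ i, ContDiff ℝ (⊤ : ℕ∞) (W i) := fun i =>
      contDiff_const.mul ((hFk i).sub (contDiff_const.mul ((contDiff_apply ℝ ℝ i).mul hEk)))
    have hWd : ∀ i y, fderiv ℝ (W i) y (Pi.single i 1) =
        kpd (some i) (F i) (kp x₀ t₀ L t y) - L * (y i * kpd (some i) E (kp x₀ t₀ L t y))
          - L * r⁻¹ * E (kp x₀ t₀ L t y) := by
      intro i y
      have f1 : HasFDerivAt (fun y : Fin n → ℝ => y i)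
        (ContinuousLinearMap.proj i : (Fin n → ℝ) →L[ℝ] ℝ) y := hasFDerivAt_apply i y
      have f2 := ((hFk i).differentiable (by simp) y).hasFDerivAt
      have f3 := (hEk.differentiable (by simp) y).hasFDerivAt
      have f4 := ((f2.sub ((f1.mul f3).const_mul L)).const_mul r⁻¹).fderiv
      have f5 : fderiv ℝ (W i) y = _ := f4
      rw [f5]
      simp only [_root_.smul_apply, _root_.sub_apply, _root_.add_apply,
        smul_eq_mul, hmapd y _ (hF i), hmapd y _ hE, ContinuousLinearMap.proj_apply,
        Pi.single_eq_same]
      field_simp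
      ring
    have hdiv := div_box_nonpos hn W hWs
      (fun i y hy hyi => by
        simp only [hW, hyi, one_mul]
        have := (abs_le.1 (h1 t ht y hy i)).2
        exact mul_nonpos_of_nonneg_of_nonpos (by positivity) (by linarith))
      (fun i y hy hyi => by
        simp only [hW, hyi]
        have := (abs_le.1 (h1 t ht y hy i)).1
        exact mul_nonneg (by positivity) (by linarith))
    have iW : IntegrableOn (fun y => ∑ i, fderiv ℝ (W i) y (Pi.single i 1))
        (Set.Icc (-1 : Fin n → ℝ) 1) :=
      (continuous_finsetSum _ fun i _ =>
        ((hWs i).continuous_fderiv (by simp)).clm_apply continuous_const).integrableOn_Icc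
    have iE : IntegrableOn (fun y => E (kp x₀ t₀ L t y)) (Set.Icc (-1 : Fin n → ℝ) 1) :=
      hEk.continuous.integrableOn_Icc
    have iG : IntegrableOn (fun y => kpd none G (t, y)) (Set.Icc (-1 : Fin n → ℝ) 1) :=
      ((kpd_smooth hG none).continuous.comp
        (by fun_prop : Continuous fun y : Fin n → ℝ => (t, y))).integrableOn_Icc
    calc _ ≤ ∫ y in Set.Icc (-1 : Fin n → ℝ) 1, ((∑ i, fderiv ℝ (W i) y (Pi.single i 1))
            + (C + n * L) * E (kp x₀ t₀ L t y)) := by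
          refine setIntegral_mono_on iG (iW.add (iE.const_mul _)) measurableSet_Icc fun y hy => ?_
          have hE0 : 0 ≤ L * E (kp x₀ t₀ L t y) :=
            (abs_nonneg _).trans (h1 t ht y hy ⟨0, by omega⟩)
          have hr2 : r⁻¹ ≤ 1 := inv_le_one_of_one_le₀ hr1
          have h3 : (n : ℝ) * (L * r⁻¹ * E (kp x₀ t₀ L t y)) ≤ n * (L * E (kp x₀ t₀ L t y)) := by
            have : L * r⁻¹ * E (kp x₀ t₀ L t y) ≤ L * E (kp x₀ t₀ L t y) := by nlinarith
            gcongr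
          have h4 := h2 t ht y hy
          rw [hGt]
          simp only [hWd, Finset.sum_sub_distrib, ← Finset.mul_sum, Finset.sum_const,
            Finset.card_univ, Fintype.card_fin, nsmul_eq_mul]
          linarith
      _ = (∫ y in Set.Icc (-1 : Fin n → ℝ) 1, ∑ i, fderiv ℝ (W i) y (Pi.single i 1))
            + (C + n * L) * Q t := by
          rw [integral_add iW (iE.const_mul _), integral_const_mul]
      _ ≤ _ := by linarith
  set κ := C + n * L
  have hd : ∀ t, HasDerivAt (fun t => exp (-κ * (t - t₀)) * Q t)
      (exp (-κ * (t - t₀)) * (-κ) * Q t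
        + exp (-κ * (t - t₀)) * ∫ y in Set.Icc (-1 : Fin n → ℝ) 1, kpd none G (t, y)) t := by
    intro t
    have : HasDerivAt (fun t => exp (-κ * (t - t₀))) (exp (-κ * (t - t₀)) * (-κ)) t := by
      simpa using (((hasDerivAt_id t).sub_const t₀).const_mul (-κ)).exp
    exact this.mul (hQ t)
  have hanti : AntitoneOn (fun t => exp (-κ * (t - t₀)) * Q t) (Set.Icc t₀ t₁) := by
    refine antitoneOn_of_deriv_nonpos (convex_Icc _ _)
      (fun t _ => (hd t).continuousAt.continuousWithinAt)
      (fun t _ => (hd t).differentiableAt.differentiableWithinAt) fun t ht => ?_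
    rw [interior_Icc] at ht
    rw [(hd t).deriv]
    have := mul_le_mul_of_nonneg_left (hQ' t ht) (exp_pos (-κ * (t - t₀))).le
    linarith
  have := hanti (Set.left_mem_Icc.2 h01) (Set.right_mem_Icc.2 h01) h01
  simp only [sub_self, mul_zero, exp_zero, one_mul] at this
  calc Q t₁ = exp (κ * (t₁ - t₀)) * (exp (-κ * (t₁ - t₀)) * Q t₁) := by
        rw [← mul_assoc, ← exp_add]; simp
    _ ≤ _ := by gcongr

end box

/-! ### The Sobolev inequality on a cube -/

section sobolev

variable {n : ℕ}

lemma sobolev_one_dim (h h' : ℝ → ℝ) (hd : ∀ x, HasDerivAt h (h' x) x) (hc : Continuous h')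
    {x : ℝ} (hx : x ∈ Set.Icc (-1 : ℝ) 1) :
    (h x) ^ 2 ≤ 2 * ∫ s in Set.Icc (-1 : ℝ) 1, ((h s) ^ 2 + (h' s) ^ 2) := by
  have hcont : Continuous h := continuous_iff_continuousAt.2 fun x => (hd x).continuousAt
  obtain ⟨s, hs, hmin⟩ := isCompact_Icc.exists_isMinOn (Set.nonempty_Icc.2 (by norm_num :
    (-1 : ℝ) ≤ 1)) (hcont.pow 2).continuousOn
  have i1 : IntegrableOn (fun s => (h s) ^ 2) (Set.Icc (-1 : ℝ) 1) :=
    (hcont.pow 2).integrableOn_Icc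
  have i2 : IntegrableOn (fun s => (h' s) ^ 2) (Set.Icc (-1 : ℝ) 1) :=
    (hc.pow 2).integrableOn_Icc
  have e1 : (h x) ^ 2 - (h s) ^ 2 = ∫ y in s..x, 2 * h y * h' y := by
    symm
    refine intervalIntegral.integral_eq_sub_of_hasDerivAt (f := fun y => (h y) ^ 2)
      (fun y _ => ?_) (((continuous_const.mul hcont).mul hc).intervalIntegrable _ _)
    simpa [mul_assoc] using (hd y).fun_pow 2
  have e2 : ∫ y in s..x, 2 * h y * h' y ≤ ∫ y in Set.Icc (-1 : ℝ) 1, ((h y) ^ 2 + (h' y) ^ 2) := by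
    calc _ ≤ ‖∫ y in s..x, 2 * h y * h' y‖ := le_abs_self _
      _ ≤ ∫ y in Set.uIoc s x, ‖2 * h y * h' y‖ :=
        intervalIntegral.norm_integral_le_integral_norm_uIoc
      _ ≤ ∫ y in Set.Icc (-1 : ℝ) 1, ‖2 * h y * h' y‖ := by
        refine setIntegral_mono_set ((continuous_const.mul hcont).mul hc).norm.integrableOn_Icc
          (Filter.Eventually.of_forall fun _ => norm_nonneg _) ?_
        exact (Set.uIoc_subset_uIcc.trans (Set.uIcc_subset_Icc hs hx)).eventuallyLE
      _ ≤ _ := by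
        refine setIntegral_mono_on ((continuous_const.mul hcont).mul hc).norm.integrableOn_Icc
          (i1.add i2) measurableSet_Icc fun y _ => ?_
        rw [Real.norm_eq_abs, abs_le]
        constructor <;> nlinarith [sq_nonneg (h y - h' y), sq_nonneg (h y + h' y)]
  have e3 : 2 * (h s) ^ 2 ≤ ∫ y in Set.Icc (-1 : ℝ) 1, (h y) ^ 2 := by
    calc 2 * (h s) ^ 2 = ∫ _ in Set.Icc (-1 : ℝ) 1, (h s) ^ 2 := by
          simp; norm_num
      _ ≤ _ := setIntegral_mono_on (continuous_const.integrableOn_Icc) i1 measurableSet_Icc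
          fun y hy => hmin hy
  have e4 : 0 ≤ ∫ y in Set.Icc (-1 : ℝ) 1, (h' y) ^ 2 :=
    integral_nonneg fun _ => sq_nonneg _
  have e5 : 0 ≤ ∫ y in Set.Icc (-1 : ℝ) 1, (h y) ^ 2 :=
    integral_nonneg fun _ => sq_nonneg _
  rw [integral_add i1 i2] at *
  linarith

lemma sobolev_one_dim_lintegral (h h' : ℝ → ℝ) (hd : ∀ x, HasDerivAt h (h' x) x)
    (hc : Continuous h') {x : ℝ} (hx : x ∈ Set.Icc (-1 : ℝ) 1) :
    ENNReal.ofReal ((h x) ^ 2) ≤ 2 * ∫⁻ s in Set.Icc (-1 : ℝ) 1,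
      (ENNReal.ofReal ((h s) ^ 2) + ENNReal.ofReal ((h' s) ^ 2)) := by
  have hcont : Continuous h := continuous_iff_continuousAt.2 fun x => (hd x).continuousAt
  have h1 := ENNReal.ofReal_le_ofReal (sobolev_one_dim h h' hd hc hx)
  have hi : IntegrableOn (fun s => (h s) ^ 2 + (h' s) ^ 2) (Set.Icc (-1 : ℝ) 1) :=
    Continuous.integrableOn_Icc (by fun_prop)
  rw [ENNReal.ofReal_mul (by norm_num), ofReal_integral_eq_lintegral_ofReal hi
    (Filter.Eventually.of_forall fun _ => add_nonneg (sq_nonneg _) (sq_nonneg _))] at h1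
  simpa [ENNReal.ofReal_add (sq_nonneg _) (sq_nonneg _)] using h1

variable {f : ℝ × (Fin n → ℝ) → ℝ}

lemma kV_continuous (hf : ContDiff ℝ (⊤ : ℕ∞) f) (m : ℕ) : Continuous (kV m f) :=
  continuous_finsetSum _ fun _ _ => continuous_finsetSum _ fun _ _ =>
    (kD_smooth hf _).continuous.pow 2

/-- The Sobolev inequality on the cube, one coordinate at a time: integrating over the coordinates
in `s` costs one derivative per coordinate. -/
lemma sobolev_marginal (hf : ContDiff ℝ (⊤ : ℕ∞) f) (m : ℕ) (t r : ℝ) (x₀ : Fin n → ℝ)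
    (hr0 : 0 ≤ r) (hr : r ≤ 2) (s : Finset (Fin n)) :
    ∀ (w : List (Option (Fin n))), 1 ≤ w.length → w.length + s.card ≤ m + 1 →
    ∀ y ∈ Set.Icc (-1 : Fin n → ℝ) 1,
      ENNReal.ofReal ((kD f w (t, x₀ + r • y)) ^ 2) ≤ 16 ^ s.card *
        lmarginal (fun _ : Fin n => (volume : Measure ℝ).restrict (Set.Icc (-1) 1)) s
          (fun y => ENNReal.ofReal (kV m f (t, x₀ + r • y))) y := by
  have hVm : Measurable fun y : Fin n → ℝ => ENNReal.ofReal (kV m f (t, x₀ + r • y)) :=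
    ((kV_continuous hf m).comp
      (by fun_prop : Continuous fun y : Fin n → ℝ => (t, x₀ + r • y))).measurable.ennreal_ofReal
  induction s using Finset.induction_on with
  | empty =>
    intro w h1 h2 y _
    simp only [Finset.card_empty, pow_zero, one_mul, lmarginal_empty]
    exact ENNReal.ofReal_le_ofReal (sq_le_kV w h1 (by simpa using h2) _)
  | insert i s hi ih =>
    intro w h1 h2 y hy
    rw [Finset.card_insert_of_notMem hi] at h2 ⊢
    rw [lmarginal_insert _ hVm hi]
    have hd : ∀ τ : ℝ, HasDerivAt (fun τ => kD f w (t, x₀ + r • Function.update y i τ))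
        (r * kD f (some i :: w) (t, x₀ + r • Function.update y i τ)) τ := by
      intro τ
      have d1 : HasDerivAt (fun τ : ℝ => ((t, x₀ + r • Function.update y i τ) : ℝ × (Fin n → ℝ)))
          ((0 : ℝ), r • (Pi.single i 1 : Fin n → ℝ)) τ :=
        (hasDerivAt_const τ t).prodMk (((hasDerivAt_update y i τ).const_smul r).const_add x₀)
      have d2 := (smooth_diff (kD_smooth hf w) (t, x₀ + r • Function.update y i τ)
        ).hasFDerivAt.comp_hasDerivAt τ d1
      have e : (((0 : ℝ), r • (Pi.single i 1 : Fin n → ℝ)) : ℝ × (Fin n → ℝ))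
          = r • kdir (some i) := by simp [kdir]
      rw [e, map_smul] at d2
      exact d2
    have hc : Continuous fun τ : ℝ =>
        r * kD f (some i :: w) (t, x₀ + r • Function.update y i τ) := by
      refine continuous_const.mul ((kD_smooth hf (some i :: w)).continuous.comp ?_)
      exact continuous_const.prodMk (continuous_const.add
        ((continuous_const.update i continuous_id).const_smul r))
    have hyi : y i ∈ Set.Icc (-1 : ℝ) 1 := ⟨hy.1 i, hy.2 i⟩
    have key := sobolev_one_dim_lintegral _ _ hd hc hyi
    rw [Function.update_eq_self] at key
    refine key.trans ?_
    have step : ∫⁻ τ in Set.Icc (-1 : ℝ) 1,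
        (ENNReal.ofReal (kD f w (t, x₀ + r • Function.update y i τ) ^ 2) +
          ENNReal.ofReal ((r * kD f (some i :: w) (t, x₀ + r • Function.update y i τ)) ^ 2))
        ≤ ∫⁻ τ in Set.Icc (-1 : ℝ) 1, (8 * 16 ^ s.card) *
          lmarginal (fun _ : Fin n => (volume : Measure ℝ).restrict (Set.Icc (-1) 1)) s
          (fun y => ENNReal.ofReal (kV m f (t, x₀ + r • y))) (Function.update y i τ) := by
      refine setLIntegral_mono' measurableSet_Icc fun τ hτ => ?_
      have hu : Function.update y i τ ∈ Set.Icc (-1 : Fin n → ℝ) 1 := by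
        constructor <;> intro j <;> by_cases hj : j = i
        · subst hj; simpa using hτ.1
        · simpa [hj] using hy.1 j
        · subst hj; simpa using hτ.2
        · simpa [hj] using hy.2 j
      have a1 := ih w h1 (by omega) _ hu
      have a2 := ih (some i :: w) (by simp) (by simp; omega) _ hu
      set Y := lmarginal (fun _ : Fin n => (volume : Measure ℝ).restrict (Set.Icc (-1) 1)) s
          (fun y => ENNReal.ofReal (kV m f (t, x₀ + r • y))) (Function.update y i τ)
      have a3 : ENNReal.ofReal ((r * kD f (some i :: w) (t, x₀ + r • Function.update y i τ)) ^ 2)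
          ≤ 4 * (16 ^ s.card * Y) := by
        rw [mul_pow, ENNReal.ofReal_mul (sq_nonneg _)]
        refine mul_le_mul' ?_ a2
        rw [← ENNReal.ofReal_ofNat 4]
        exact ENNReal.ofReal_le_ofReal (by nlinarith)
      calc _ ≤ 16 ^ s.card * Y + 4 * (16 ^ s.card * Y) := add_le_add a1 a3
        _ = 5 * 16 ^ s.card * Y := by ring
        _ ≤ 8 * 16 ^ s.card * Y := by gcongr; norm_num
    calc _ ≤ 2 * _ := mul_le_mul_right step _
      _ = _ := by
        rw [lintegral_const_mul' _ _ (by finiteness), ← mul_assoc]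
        congr 1
        ring

/-- The Sobolev inequality on a cube of half side `r ≤ 2`. The integral is taken over the rescaled
cube, so no lower bound on `r` is needed. -/
lemma sobolev_box (hf : ContDiff ℝ (⊤ : ℕ∞) f) (m : ℕ) (t r : ℝ) (x₀ : Fin n → ℝ)
    (hr0 : 0 ≤ r) (hr : r ≤ 2) (w : List (Option (Fin n))) (h1 : 1 ≤ w.length)
    (h2 : w.length + n ≤ m + 1) (y : Fin n → ℝ) (hy : y ∈ Set.Icc (-1 : Fin n → ℝ) 1) :
    (kD f w (t, x₀ + r • y)) ^ 2 ≤
      16 ^ n * ∫ y in Set.Icc (-1 : Fin n → ℝ) 1, kV m f (t, x₀ + r • y) := by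
  have h := sobolev_marginal hf m t r x₀ hr0 hr Finset.univ w h1 (by simpa using h2) y hy
  have hm : Measure.pi (fun _ : Fin n => (volume : Measure ℝ).restrict (Set.Icc (-1) 1))
      = volume.restrict (Set.Icc (-1 : Fin n → ℝ) 1) := by
    rw [← Measure.restrict_pi_pi, Set.pi_univ_Icc]
    rfl
  have hVc : Continuous fun y : Fin n → ℝ => kV m f (t, x₀ + r • y) :=
    (kV_continuous hf m).comp (by fun_prop)
  rw [lmarginal_univ, hm, ← ofReal_integral_eq_lintegral_ofReal hVc.integrableOn_Icc
    (Filter.Eventually.of_forall fun _ => kV_nonneg _ _), Finset.card_univ, Fintype.card_fin,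
    ← ENNReal.ofReal_ofNat, ← ENNReal.ofReal_pow (by norm_num),
    ← ENNReal.ofReal_mul (by positivity)] at h
  exact (ENNReal.ofReal_le_ofReal_iff (mul_nonneg (by positivity)
    (integral_nonneg fun _ => kV_nonneg _ _))).1 h

end sobolev

/-! ### Local continuation -/

section continuation

variable {n : ℕ} {f : ℝ × (Fin n → ℝ) → ℝ}

/-- A continuity argument: a closed condition `S` on time and a compact parameter set never occurs
if its absence before `t` always excludes it at `t`. -/
lemma bootstrap {Y : Type*} [TopologicalSpace Y] {B : Set Y} (hB : IsCompact B)
    (S : Set (ℝ × Y)) (hS : IsClosed S) (t₀ t₁ : ℝ)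
    (h : ∀ t ∈ Set.Icc t₀ t₁, (∀ s, t₀ ≤ s → s < t → ∀ y ∈ B, (s, y) ∉ S) →
      ∀ y ∈ B, (t, y) ∉ S) :
    ∀ t ∈ Set.Icc t₀ t₁, ∀ y ∈ B, (t, y) ∉ S := by
  by_contra! hcon
  obtain ⟨t, ht, y, hy, hty⟩ := hcon
  have hK : IsCompact (Prod.fst '' ((Set.Icc t₀ t₁ ×ˢ B) ∩ S)) :=
    ((isCompact_Icc.prod hB).inter_right hS).image continuous_fst
  obtain ⟨m, ⟨⟨s, z⟩, ⟨⟨hs, hz⟩, hsz⟩, rfl⟩, hmin⟩ :=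
    hK.exists_isLeast ⟨t, (t, y), ⟨⟨ht, hy⟩, hty⟩, rfl⟩
  refine h s hs (fun s' h1 h2 y' hy' hS' => ?_) z hz hsz
  have := hmin ⟨(s', y'), ⟨⟨⟨h1, h2.le.trans hs.2⟩, hy'⟩, hS'⟩, rfl⟩
  exact absurd h2 (not_lt.2 this)

lemma smul_mem_cube {θ : ℝ} (h0 : 0 ≤ θ) (h1 : θ ≤ 1) {y : Fin n → ℝ}
    (hy : y ∈ Set.Icc (-1 : Fin n → ℝ) 1) : θ • y ∈ Set.Icc (-1 : Fin n → ℝ) 1 := by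
  constructor <;> intro i
  · have := hy.1 i
    simp only [Pi.neg_apply, Pi.one_apply, Pi.smul_apply, smul_eq_mul] at this ⊢
    nlinarith
  · have := hy.2 i
    simp only [Pi.one_apply, Pi.smul_apply, smul_eq_mul] at this ⊢
    nlinarith

/-- A bound on the derivatives of order `1, …, 2n + 2` bounds the energy density. -/
lemma kEN_le {a c N : ℝ} (ha : 0 ≤ a) {z : ℝ × (Fin n → ℝ)}
    (hN : ∀ w : List (Option (Fin n)), 1 ≤ w.length → w.length ≤ 2 * n + 2 → |kD f w z| ≤ N) :
    kEN a c f z ≤ (kW n (2 * n + 1)).card * ((1 + a * N) * N ^ 2 + c ^ 2 * (n * N ^ 2)) := by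
  have hN0 : 0 ≤ N := (abs_nonneg _).trans (hN [none] (by simp) (by simp))
  unfold kEN
  rw [← nsmul_eq_mul]
  refine Finset.sum_le_card_nsmul _ _ _ fun w hw => ?_
  have hw' : w.length ≤ 2 * n + 1 := by simpa using hw
  have hsq : ∀ j, kpd j (kD f w) z * kpd j (kD f w) z ≤ N ^ 2 := by
    intro j
    have h1 : |kpd j (kD f w) z| ≤ N := hN (j :: w) (by simp) (by simpa using hw')
    nlinarith [abs_mul_abs_self (kpd j (kD f w) z), abs_nonneg (kpd j (kD f w) z)]
  have h0 : |kpd none f z| ≤ N := hN [none] (by simp) (by simp)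
  unfold kEn
  refine add_le_add ?_ ?_
  · have : 1 - a * kpd none f z ≤ 1 + a * N := by
      have := mul_le_mul_of_nonneg_left ((neg_abs_le _).trans' (neg_le_neg h0)) ha
      linarith
    exact mul_le_mul this (hsq _) (mul_self_nonneg _) (by positivity)
  · refine mul_le_mul_of_nonneg_left ?_ (sq_nonneg c)
    calc _ ≤ ∑ _i : Fin n, N ^ 2 := Finset.sum_le_sum fun i _ => hsq _
      _ = _ := by simp

set_option maxHeartbeats 1000000 in
/-- Local continuation: a solution whose derivatives are bounded at time `t₀` and for which
`|∂_t f| < 1/(2a)` uniformly at `t₀` keeps `|∂_t f| ≤ 1/(2a)` on all of space for a short time.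
The bounds are propagated on shrinking cubes around an arbitrary point `x₀`, with constants that
do not depend on `x₀`. -/
lemma local_continuation (hn : 1 ≤ n) (hf : ContDiff ℝ (⊤ : ℕ∞) f) {a b c κ N t₀ T : ℝ}
    (ha : 0 < a) (hb : 0 ≤ b) (hc : 0 < c) (hκ : 0 < κ) (hT : t₀ < T)
    (heq : ∀ z ∈ Set.Ioo t₀ T ×ˢ (Set.univ : Set (Fin n → ℝ)), kR a b c f f z = 0)
    (hN : ∀ w : List (Option (Fin n)), 1 ≤ w.length → w.length ≤ 2 * n + 2 →
      ∀ x, |kD f w (t₀, x)| ≤ N)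
    (hM : ∀ x, |kpd none f (t₀, x)| ≤ 1 / (2 * a) - κ) :
    ∃ δ, 0 < δ ∧ t₀ + δ ≤ T ∧ ∀ t ∈ Set.Icc t₀ (t₀ + δ), ∀ x,
      |kpd none f (t, x)| ≤ 1 / (2 * a) := by
  obtain ⟨C, hC, hEn⟩ := kEN_ineq hf ha.le hb hc (isOpen_Ioo.prod isOpen_univ) heq
  have hN0 : 0 ≤ N := (abs_nonneg _).trans (hN [none] (by simp) (by simp) 0)
  set q₀ : ℝ := (kW n (2 * n + 1)).card * ((1 + a * N) * N ^ 2 + c ^ 2 * (n * N ^ 2)) with hq₀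
  have hq₀0 : 0 ≤ q₀ := by positivity
  set R : ℝ := 16 ^ n * ((2 + (c ^ 2)⁻¹) * (2 * (2 ^ n * q₀))) with hR
  have hR0 : 0 ≤ R := by positivity
  set K : ℝ := 1 + N + R with hK
  have hK1 : 1 ≤ K := by linarith
  set L : ℝ := 2 * c ^ 2 + 1 + 2 * b * K with hL
  have hL0 : 0 < L := by positivity
  have hG0 : 0 < C * K + n * L + 1 := by positivity
  set δ : ℝ := min (T - t₀) (min (log 2 / (C * K + n * L + 1)) (min (1 / L) (κ / (2 * K))))
  have hδ0 : 0 < δ := by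
    have := log_pos (by norm_num : (1 : ℝ) < 2)
    have : 0 < T - t₀ := by linarith
    positivity
  have hδ1 : δ ≤ T - t₀ := min_le_left _ _
  have hδ2 : (C * K + n * L) * δ ≤ log 2 := by
    have : δ ≤ log 2 / (C * K + n * L + 1) := (min_le_right _ _).trans (min_le_left _ _)
    rw [le_div_iff₀ hG0] at this
    nlinarith
  have hδ3 : L * δ ≤ 1 := by
    have : δ ≤ 1 / L := (min_le_right _ _).trans ((min_le_right _ _).trans (min_le_left _ _))
    rw [le_div_iff₀ hL0] at this
    linarith
  have hδ4 : K * δ < κ := by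
    have : δ ≤ κ / (2 * K) := (min_le_right _ _).trans ((min_le_right _ _).trans (min_le_right _ _))
    rw [le_div_iff₀ (by positivity)] at this
    nlinarith
  refine ⟨δ, hδ0, by linarith, fun t ht x₀ => ?_⟩
  set S : Set (ℝ × (Fin n → ℝ)) := {q | 1 / (2 * a) ≤ |kpd none f (kp x₀ t₀ L q.1 q.2)|} ∪
    ⋃ w ∈ (kW n (n + 2)).filter (fun w => 1 ≤ w.length),
      {q | K ≤ |kD f w (kp x₀ t₀ L q.1 q.2)|} with hS
  have hnotS : ∀ q, q ∉ S ↔ |kpd none f (kp x₀ t₀ L q.1 q.2)| < 1 / (2 * a) ∧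
      ∀ w : List (Option (Fin n)), 1 ≤ w.length → w.length ≤ n + 2 →
        |kD f w (kp x₀ t₀ L q.1 q.2)| < K := by
    intro q
    simp only [hS, Set.mem_union, Set.mem_ofPred_eq, Set.mem_iUnion, Finset.mem_filter, mem_kW,
      not_or, not_le, not_exists, exists_prop, not_and]
    exact and_congr_right fun _ => ⟨fun h w h1 h2 => h w ⟨h2, h1⟩, fun h w h1 => h w h1.2 h1.1⟩
  have hkc : Continuous fun q : ℝ × (Fin n → ℝ) => kp x₀ t₀ L q.1 q.2 :=
    (kp_smooth x₀ t₀ L).continuous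
  have hSc : IsClosed S := by
    refine (isClosed_le continuous_const
      ((kpd_smooth hf none).continuous.comp hkc).abs).union ?_
    exact isClosed_biUnion_finset fun w _ => isClosed_le continuous_const
      ((kD_smooth hf w).continuous.comp hkc).abs
  have main := bootstrap (isCompact_Icc : IsCompact (Set.Icc (-1 : Fin n → ℝ) 1)) S hSc t₀ (t₀ + δ)
    ?_
  · have h0 := ((hnotS _).1 (main t ht 0 ⟨fun i => by simp, fun i => by simp⟩)).1
    simpa [kp] using h0.le
  intro t ht hprev
  have hr : ∀ s ∈ Set.Icc t₀ t, 1 ≤ 2 - L * (s - t₀) := by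
    intro s hs
    have : L * (s - t₀) ≤ L * δ := mul_le_mul_of_nonneg_left (by linarith [hs.2, ht.2]) hL0.le
    linarith
  have hA : ∀ y ∈ Set.Icc (-1 : Fin n → ℝ) 1, |kpd none f (kp x₀ t₀ L t y)| < 1 / (2 * a) := by
    intro y hy
    set x := (kp x₀ t₀ L t y).2 with hx
    have hder : ∀ s, HasDerivAt (fun s => kpd none f (s, x)) (kD f [none, none] (s, x)) s := by
      intro s
      have d1 : HasDerivAt (fun s : ℝ => ((s, x) : ℝ × (Fin n → ℝ))) (kdir none) s :=
        (hasDerivAt_id s).prodMk (hasDerivAt_const s x)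
      exact (smooth_diff (kpd_smooth hf none) (s, x)).hasFDerivAt.comp_hasDerivAt s d1
    have hbd : ∀ s ∈ Set.Ico t₀ t, ‖kD f [none, none] (s, x)‖ ≤ K := by
      intro s hs
      have hrs := hr s ⟨hs.1, hs.2.le⟩
      have hrt := hr t ⟨ht.1, le_rfl⟩
      -- the point stays in the cube of the earlier time, which is larger
      set θ := (2 - L * (t - t₀)) / (2 - L * (s - t₀)) with hθ
      have hθ0 : 0 ≤ θ := by positivity
      have hθ1 : θ ≤ 1 := by
        rw [hθ, div_le_one (by linarith)]
        have := mul_le_mul_of_nonneg_left (sub_le_sub_right hs.2.le t₀) hL0.le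
        linarith
      have hy' := smul_mem_cube hθ0 hθ1 hy
      have e : kp x₀ t₀ L s (θ • y) = (s, x) := by
        simp only [kp, hx, smul_smul, hθ]
        rw [mul_div_cancel₀ _ (by linarith)]
      have := ((hnotS _).1 (hprev s hs.1 hs.2 _ hy')).2 [none, none] (by simp) (by simp)
      simp only [e] at this
      exact this.le
    have hmv := norm_image_sub_le_of_norm_deriv_le_segment' (f := fun s => kpd none f (s, x))
      (fun s _ => (hder s).hasDerivWithinAt) hbd t ⟨ht.1, le_rfl⟩
    rw [Real.norm_eq_abs] at hmv
    have h1 : K * (t - t₀) ≤ K * δ := mul_le_mul_of_nonneg_left (by linarith [ht.2]) (by linarith)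
    have h2 := hM x
    have h3 : |kpd none f (t, x)| ≤ |kpd none f (t₀, x)| + |kpd none f (t, x) - kpd none f (t₀, x)| := by
      have := abs_add_le (kpd none f (t₀, x)) (kpd none f (t, x) - kpd none f (t₀, x))
      simpa using this
    change |kpd none f (t, x)| < _
    linarith
  have hhalf : ∀ z : ℝ × (Fin n → ℝ), |kpd none f z| < 1 / (2 * a) → a * kpd none f z ≤ 1 / 2 := by
    intro z hz
    have := mul_le_mul_of_nonneg_left ((le_abs_self _).trans hz.le) ha.le
    have e : a * (1 / (2 * a)) = 1 / 2 := by field_simp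
    linarith
  have hEc : Continuous (kEN a c f) := (kEN_smooth hf a c).continuous
  have hmb := moving_box hn (kEN a c f) (kFL b c f) (kEN_smooth hf a c) (kFL_smooth hf b c)
    x₀ t₀ t L (C * K) hL0 ht.1
    ((mul_le_mul_of_nonneg_left (by linarith [ht.2] : t - t₀ ≤ δ) hL0.le).trans hδ3)
    (fun s hs y hy i => by
      have := (hnotS _).1 (hprev s hs.1.le hs.2 y hy)
      exact kFL_le hb (by linarith) (hhalf _ this.1) i (this.2 [some i] (by simp) (by simp)).le)
    (fun s hs y hy => by
      have := (hnotS _).1 (hprev s hs.1.le hs.2 y hy)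
      refine hEn _ ⟨⟨hs.1, ?_⟩, trivial⟩ K (hhalf _ this.1) fun w h1 h2 => (this.2 w h1 h2).le
      change s < T
      linarith [hs.2, ht.2])
  have hQ0 : ∫ y in Set.Icc (-1 : Fin n → ℝ) 1, kEN a c f (kp x₀ t₀ L t₀ y) ≤ 2 ^ n * q₀ := by
    have hvol : (volume : Measure (Fin n → ℝ)).real (Set.Icc (-1) 1) = 2 ^ n := by
      rw [Measure.real, Real.volume_Icc_pi_toReal (fun i => by simp)]
      simp; norm_num
    calc _ ≤ ∫ y in Set.Icc (-1 : Fin n → ℝ) 1, q₀ := by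
          refine setIntegral_mono_on (hEc.comp (hkc.comp (by fun_prop :
            Continuous fun y : Fin n → ℝ => (t₀, y)))).integrableOn_Icc
            continuous_const.integrableOn_Icc measurableSet_Icc fun y _ => ?_
          exact kEN_le ha.le fun w h1 h2 => hN w h1 h2 _
      _ = _ := by simp [hvol]
  have hexp : exp ((C * K + n * L) * (t - t₀)) ≤ 2 := by
    rw [← Real.exp_log (by norm_num : (0 : ℝ) < 2), Real.exp_le_exp]
    exact (mul_le_mul_of_nonneg_left (by linarith [ht.2] : t - t₀ ≤ δ) (by positivity)).trans hδ2
  have hcy : Continuous fun y : Fin n → ℝ => kp x₀ t₀ L t y :=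
    hkc.comp (by fun_prop : Continuous fun y : Fin n → ℝ => (t, y))
  have hQt : ∫ y in Set.Icc (-1 : Fin n → ℝ) 1, kEN a c f (kp x₀ t₀ L t y) ≤ 2 * (2 ^ n * q₀) :=
    hmb.trans ((mul_le_mul_of_nonneg_left hQ0 (exp_pos _).le).trans
      (mul_le_mul_of_nonneg_right hexp (by positivity)))
  have hV : ∫ y in Set.Icc (-1 : Fin n → ℝ) 1, kV (2 * n + 1) f (kp x₀ t₀ L t y) ≤
      (2 + (c ^ 2)⁻¹) * (2 * (2 ^ n * q₀)) := by
    calc _ ≤ ∫ y in Set.Icc (-1 : Fin n → ℝ) 1, (2 + (c ^ 2)⁻¹) * kEN a c f (kp x₀ t₀ L t y) := by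
          refine setIntegral_mono_on ((kV_continuous hf _).comp hcy).integrableOn_Icc
            (continuous_const.mul (hEc.comp hcy)).integrableOn_Icc measurableSet_Icc fun y hy => ?_
          exact kV_le_kEN hc (hhalf _ (hA y hy))
      _ ≤ _ := by
          rw [integral_const_mul]
          exact mul_le_mul_of_nonneg_left hQt (by positivity)
  intro y hy
  refine (hnotS _).2 ⟨hA y hy, fun w h1 h2 => ?_⟩
  have hrt := hr t ⟨ht.1, le_rfl⟩
  have hsob := sobolev_box hf (2 * n + 1) t (2 - L * (t - t₀)) x₀ (by linarith)
    (by linarith [mul_nonneg hL0.le (sub_nonneg.2 ht.1)]) w h1 (by omega) y hy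
  have : (kD f w (kp x₀ t₀ L t y)) ^ 2 ≤ R :=
    hsob.trans (mul_le_mul_of_nonneg_left hV (by positivity))
  rw [← sq_abs] at this
  change |kD f w (kp x₀ t₀ L t y)| < K
  have hRK : R < K := by linarith
  exact lt_of_pow_lt_pow_left₀ 2 (by linarith) (this.trans_lt (hRK.trans_le (le_self_pow₀ hK1 two_ne_zero)))

end continuation

/-! ### Schwartz slices and the energy -/

section translation

variable {n : ℕ}

lemma isSchwartz_pd {g : (Fin n → ℝ) → ℝ} (hg : IsSchwartz g) (i : Fin n) :
    IsSchwartz (pd i g) := by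
  obtain ⟨G, rfl⟩ := hg
  refine ⟨SchwartzMap.evalCLM ℝ (Fin n → ℝ) ℝ (Pi.single i 1)
    (SchwartzMap.fderivCLM ℝ (Fin n → ℝ) ℝ G), ?_⟩
  ext x
  simp [pd]

lemma IsSchwartz.bounded {g : (Fin n → ℝ) → ℝ} (hg : IsSchwartz g) : ∃ M, ∀ x, |g x| ≤ M := by
  obtain ⟨G, rfl⟩ := hg
  obtain ⟨C, -, hC⟩ := G.decay 0 0
  exact ⟨C, fun x => by simpa using hC x⟩

lemma IsSchwartz.abs_le_supNorm {g : (Fin n → ℝ) → ℝ} (hg : IsSchwartz g) (x : Fin n → ℝ) :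
    |g x| ≤ supNorm g := by
  obtain ⟨M, hM⟩ := hg.bounded
  exact le_ciSup (f := fun x => |g x|) ⟨M, by rintro _ ⟨y, rfl⟩; exact hM y⟩ x

variable {f : ℝ × (Fin n → ℝ) → ℝ}

lemma kpd_none_eq (hf : ContDiff ℝ (⊤ : ℕ∞) f) (t : ℝ) (x : Fin n → ℝ) :
    HasDerivAt (fun s => f (s, x)) (kpd none f (t, x)) t := by
  have d1 : HasDerivAt (fun s : ℝ => ((s, x) : ℝ × (Fin n → ℝ))) (kdir none) t :=
    (hasDerivAt_id t).prodMk (hasDerivAt_const t x)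
  exact (smooth_diff hf (t, x)).hasFDerivAt.comp_hasDerivAt t d1

lemma pd_slice (hf : ContDiff ℝ (⊤ : ℕ∞) f) (i : Fin n) (t : ℝ) :
    pd i (fun x => f (t, x)) = fun x => kpd (some i) f (t, x) := by
  ext x
  have d1 : HasFDerivAt (fun x : Fin n → ℝ => ((t, x) : ℝ × (Fin n → ℝ)))
      (ContinuousLinearMap.inr ℝ ℝ (Fin n → ℝ)) x := hasFDerivAt_prodMk_right t x
  have := ((smooth_diff hf (t, x)).hasFDerivAt.comp x d1).fderiv
  unfold pd kpd
  change fderiv ℝ (f ∘ fun x => (t, x)) x _ = _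
  rw [this]
  simp [kdir]

lemma kpd_iter_smooth (hf : ContDiff ℝ (⊤ : ℕ∞) f) (k : ℕ) :
    ContDiff ℝ (⊤ : ℕ∞) ((kpd none)^[k] f) := by
  induction k with
  | zero => exact hf
  | succ k ih => rw [Function.iterate_succ_apply']; exact kpd_smooth ih _

lemma kpd_iter_comm (hf : ContDiff ℝ (⊤ : ℕ∞) f) (k : ℕ) (j : Option (Fin n)) :
    (kpd none)^[k] (kpd j f) = kpd j ((kpd none)^[k] f) := by
  induction k with
  | zero => rfl
  | succ k ih =>
    rw [Function.iterate_succ_apply', Function.iterate_succ_apply', ih,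
      kpd_comm (kpd_iter_smooth hf k)]

/-- If all time derivatives of `f` are Schwartz at time `t`, so are all its derivatives. -/
lemma isSchwartz_kD (hf : ContDiff ℝ (⊤ : ℕ∞) f) (t : ℝ)
    (h : ∀ k, IsSchwartz fun x => (kpd none)^[k] f (t, x)) (w : List (Option (Fin n))) :
    ∀ k, IsSchwartz fun x => (kpd none)^[k] (kD f w) (t, x) := by
  induction w with
  | nil => exact h
  | cons j w ih =>
    intro k
    change IsSchwartz fun x => (kpd none)^[k] (kpd j (kD f w)) (t, x)
    cases j with
    | none => exact ih (k + 1)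
    | some i =>
      rw [kpd_iter_comm (kD_smooth hf w), ← pd_slice (kpd_iter_smooth (kD_smooth hf w) k)]
      exact isSchwartz_pd (ih k) i

variable {u : ℝ → (Fin n → ℝ) → ℝ}

/-- The function on space-time belonging to `u`. -/
def kU (u : ℝ → (Fin n → ℝ) → ℝ) : ℝ × (Fin n → ℝ) → ℝ := fun p => u p.1 p.2

lemma dtIter_eq (hu : SmoothSchwartz u) (k : ℕ) (t : ℝ) (x : Fin n → ℝ) :
    dtIter k u t x = (kpd none)^[k] (kU u) (t, x) := by
  unfold dtIter
  induction k generalizing t with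
  | zero => simp [kU]
  | succ k ih =>
    rw [iteratedDeriv_succ, Function.iterate_succ_apply', funext ih]
    exact (kpd_none_eq (kpd_iter_smooth hu.1 k) t x).deriv

lemma dt_eq (hu : SmoothSchwartz u) (t : ℝ) (x : Fin n → ℝ) :
    dt u t x = kpd none (kU u) (t, x) := (kpd_none_eq hu.1 t x).deriv

lemma dt_schwartz (hu : SmoothSchwartz u) (t : ℝ) : IsSchwartz fun x => dt u t x := by
  have := hu.2 1 t
  simpa [dtIter, iteratedDeriv_one, dt] using this

/-- The derivatives of each order are bounded on every time slice. -/
lemma kD_bounded (hu : SmoothSchwartz u) (t : ℝ) (m : ℕ) :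
    ∃ N, ∀ w : List (Option (Fin n)), w.length ≤ m → ∀ x, |kD (kU u) w (t, x)| ≤ N := by
  have h : ∀ w, ∃ N, ∀ x, |kD (kU u) w (t, x)| ≤ N := fun w =>
    (isSchwartz_kD (f := kU u) hu.1 t (fun k => by simpa only [dtIter_eq hu] using hu.2 k t) w 0).bounded
  choose N hN using h
  refine ⟨∑ w ∈ kW n m, |N w|, fun w hw x => (hN w x).trans ((le_abs_self _).trans ?_)⟩
  exact Finset.single_le_sum (f := fun w => |N w|) (fun _ _ => abs_nonneg _) (by simpa using hw)

lemma kuznetsov_kR (hu : SmoothSchwartz u) {c α β ε t : ℝ} (h : InviscidKuznetsov c α β ε u t)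
    (x : Fin n → ℝ) : kR (α * ε) (β * ε) c (kU u) (kU u) (t, x) = 0 := by
  have h1 := h x
  have e1 : ∀ i, pd i (u t) = fun x => kpd (some i) (kU u) (t, x) := fun i =>
    pd_slice (f := kU u) hu.1 i t
  have e2 : ∀ i, pd i (fun x => kpd (some i) (kU u) (t, x)) =
      fun x => kpd (some i) (kpd (some i) (kU u)) (t, x) := fun i =>
    pd_slice (kpd_smooth hu.1 _) i t
  have e3 : dt u t = fun x => kpd none (kU u) (t, x) := funext fun x => dt_eq hu t x
  have e4 : ∀ i, pd i (fun x => kpd none (kU u) (t, x)) =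
      fun x => kpd (some i) (kpd none (kU u)) (t, x) := fun i =>
    pd_slice (kpd_smooth hu.1 _) i t
  rw [dtIter_eq hu] at h1
  simp only [lap, gradDot, e1, e2, e3, e4, Function.iterate_succ, Function.iterate_zero,
    Function.comp_apply, id] at h1
  unfold kR
  linarith

lemma L2sq_nonneg (g : (Fin n → ℝ) → ℝ) : 0 ≤ L2sq g := integral_nonneg fun _ => sq_nonneg _

lemma Hsq_nonneg (k : ℕ) (g : (Fin n → ℝ) → ℝ) : 0 ≤ Hsq k g :=
  Finset.sum_nonneg fun _ _ => L2sq_nonneg _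

lemma gradHsq_nonneg (k : ℕ) (g : (Fin n → ℝ) → ℝ) : 0 ≤ gradHsq k g :=
  Finset.sum_nonneg fun _ _ => Hsq_nonneg _ _

lemma Em_nonneg (m : ℕ) (t : ℝ) : 0 ≤ Em m u t :=
  add_nonneg (gradHsq_nonneg _ _) (Finset.sum_nonneg fun _ _ => Hsq_nonneg _ _)

lemma Hsq_dt_le_Em (k : ℕ) (t : ℝ) : Hsq k (fun x => dt u t x) ≤ Em (k + 1) u t := by
  have h1 : Hsq k (fun x => dt u t x) ≤ Hsq (k + 1 + 1 - 1) fun x => dtIter 1 u t x := by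
    have e : (fun x => dtIter 1 u t x) = fun x => dt u t x := by
      simp [dtIter, iteratedDeriv_one, dt]
    rw [e]
    refine Finset.sum_le_sum_of_subset_of_nonneg ?_ fun _ _ _ => L2sq_nonneg _
    intro A hA
    simp only [multiIdx, Finset.mem_filter, Fintype.mem_piFinset, Finset.mem_range] at hA ⊢
    exact ⟨fun a => by have := hA.1 a; omega, by omega⟩
  refine h1.trans (le_add_of_nonneg_of_le (gradHsq_nonneg _ _) ?_)
  exact Finset.single_le_sum (f := fun i => Hsq (k + 1 + 1 - i) fun x => dtIter i u t x)
    (fun _ _ => Hsq_nonneg _ _) (by simp)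

end translation

/-! ### A nonlinear Gronwall inequality -/

section gronwall

/-- The nonlinear Gronwall inequality for the exponent `3/2`. The integral is allowed to be
meaningless, in which case it takes the value `0`; this does not harm the conclusion. -/
lemma bihari {E : ℝ → ℝ} {A k t : ℝ} (hE : ∀ s, 0 ≤ E s) (hA : 0 < A) (hk : 0 < k) (ht : 0 ≤ t)
    (h : ∀ s ∈ Set.Icc 0 t, E s ≤ A + k * ∫ τ in (0 : ℝ)..s, (E τ) ^ ((3 : ℝ) / 2))
    {θ : ℝ} (hθ1 : θ < 1) (hkt : k * √A * t ≤ 2 * θ) :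
    E t ≤ A * ((1 - θ)⁻¹) ^ 2 := by
  have hθ0 : 0 ≤ θ := by
    have : 0 ≤ k * √A * t := by positivity
    linarith
  have h1θ : 0 < 1 - θ := by linarith
  have hge1 : 1 ≤ ((1 - θ)⁻¹) ^ 2 := one_le_pow₀ ((one_le_inv₀ h1θ).2 (by linarith))
  by_cases hEint : IntervalIntegrable (fun τ => (E τ) ^ ((3 : ℝ) / 2)) volume 0 t
  swap
  · have := h t ⟨ht, le_rfl⟩
    rw [intervalIntegral.integral_undef hEint] at this
    nlinarith
  set F : ℝ → ℝ := fun s => A + k * ∫ τ in (0 : ℝ)..s, (E τ) ^ ((3 : ℝ) / 2) with hF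
  have hFc : ContinuousOn F (Set.Icc 0 t) := by
    have := intervalIntegral.continuousOn_primitive_interval' hEint (Set.left_mem_uIcc)
    rw [Set.uIcc_of_le ht] at this
    exact continuousOn_const.add (continuousOn_const.mul this)
  have hI0 : ∀ s, 0 ≤ s → 0 ≤ ∫ τ in (0 : ℝ)..s, (E τ) ^ ((3 : ℝ) / 2) := fun s hs =>
    intervalIntegral.integral_nonneg hs fun τ _ => Real.rpow_nonneg (hE τ) _
  have hFA : ∀ s, 0 ≤ s → A ≤ F s := fun s hs =>
    le_add_of_nonneg_right (mul_nonneg hk.le (hI0 s hs))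
  -- `F` is only continuous; integrating `F ^ (3/2)`, extended to the whole line, once more gives a
  -- differentiable majorant `P`
  set G : ℝ → ℝ := fun s => (F (Set.projIcc 0 t ht s)) ^ ((3 : ℝ) / 2) with hG
  have hGc : Continuous G := by
    have h1 : Continuous fun s : ℝ => F (Set.projIcc 0 t ht s) :=
      (continuousOn_iff_continuous_domRestrict.1 hFc).comp continuous_projIcc
    exact h1.rpow_const fun s => Or.inr (by norm_num)
  have hGeq : ∀ s ∈ Set.Icc 0 t, G s = (F s) ^ ((3 : ℝ) / 2) := by
    intro s hs
    simp only [hG, Set.projIcc_of_mem ht hs]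
  set P : ℝ → ℝ := fun s => A + k * ∫ τ in (0 : ℝ)..s, G τ with hP
  have hPd : ∀ s, HasDerivAt P (k * G s) s := fun s =>
    ((intervalIntegral.integral_hasDerivAt_right (hGc.intervalIntegrable _ _)
      (hGc.stronglyMeasurableAtFilter _ _) hGc.continuousAt).const_mul k).const_add A
  have hFP : ∀ s ∈ Set.Icc 0 t, F s ≤ P s := by
    intro s hs
    refine add_le_add_right (mul_le_mul_of_nonneg_left ?_ hk.le) _
    refine intervalIntegral.integral_mono_on hs.1 (hEint.mono_set ?_) (hGc.intervalIntegrable _ _)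
      fun τ hτ => ?_
    · rw [Set.uIcc_of_le hs.1, Set.uIcc_of_le ht]; exact Set.Icc_subset_Icc_right hs.2
    · rw [hGeq τ ⟨hτ.1, hτ.2.trans hs.2⟩]
      exact Real.rpow_le_rpow (hE τ) (h τ ⟨hτ.1, hτ.2.trans hs.2⟩) (by norm_num)
  have hPA : ∀ s ∈ Set.Icc 0 t, A ≤ P s := fun s hs => (hFA s hs.1).trans (hFP s hs)
  -- `P ^ (-1/2)` decreases at rate at most `k / 2`
  set W : ℝ → ℝ := fun s => (√(P s))⁻¹ with hW
  have hWd : ∀ s ∈ Set.Icc 0 t,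
      HasDerivAt W (-(k * G s / (2 * √(P s))) / (√(P s)) ^ 2) s := by
    intro s hs
    have hp : 0 < P s := hA.trans_le (hPA s hs)
    exact ((hPd s).sqrt hp.ne').fun_inv (Real.sqrt_pos.2 hp).ne'
  have hmono : W 0 - k / 2 * t ≤ W t := by
    have := (convex_Icc 0 t).mul_sub_le_image_sub_of_le_deriv (f := W) (C := -(k / 2))
      (fun s hs => (hWd s hs).continuousAt.continuousWithinAt)
      (fun s hs => (hWd s (interior_subset hs)).differentiableAt.differentiableWithinAt)
      (fun s hs => ?_) 0 ⟨le_rfl, ht⟩ t ⟨ht, le_rfl⟩ ht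
    · linarith
    · have hs' := interior_subset hs
      rw [(hWd s hs').deriv]
      have hp : 0 < P s := hA.trans_le (hPA s hs')
      have hq : 0 < √(P s) := Real.sqrt_pos.2 hp
      have hGP : G s ≤ (√(P s)) ^ 3 := by
        rw [hGeq s hs', Real.sqrt_eq_rpow, ← Real.rpow_natCast, ← Real.rpow_mul hp.le]
        norm_num
        exact Real.rpow_le_rpow (hA.le.trans (hFA s hs'.1)) (hFP s hs') (by norm_num)
      rw [neg_div, neg_le_neg_iff, div_div, div_le_iff₀ (by positivity)]
      nlinarith
  have hA' : 0 < √A := Real.sqrt_pos.2 hA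
  have hW0 : W 0 = (√A)⁻¹ := by simp [hW, hP]
  have hPt : 0 < P t := hA.trans_le (hPA t ⟨ht, le_rfl⟩)
  have hq : 0 < √(P t) := Real.sqrt_pos.2 hPt
  have hfin : √(P t) ≤ √A * (1 - θ)⁻¹ := by
    rw [hW0] at hmono
    have h1 : (√A)⁻¹ * (1 - θ) ≤ (√(P t))⁻¹ := by
      refine le_trans ?_ hmono
      have : k / 2 * t ≤ (√A)⁻¹ * θ := by
        rw [inv_mul_eq_div, le_div_iff₀ hA']
        linarith
      linarith
    have h2 := inv_anti₀ (by positivity) h1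
    rwa [inv_inv, mul_inv, inv_inv] at h2
  calc E t ≤ F t := h t ⟨ht, le_rfl⟩
    _ ≤ P t := hFP t ⟨ht, le_rfl⟩
    _ = (√(P t)) ^ 2 := (Real.sq_sqrt hPt.le).symm
    _ ≤ (√A * (1 - θ)⁻¹) ^ 2 := pow_le_pow_left₀ hq.le hfin 2
    _ = _ := by rw [mul_pow, Real.sq_sqrt hA.le]

end gronwall
/-! ### The lifespan bound -/

/-- Lifespan estimate for the inviscid Kuznetsov equation (Theorem 3.3): with
`m₀ = ⌊n/2⌋ + 2`, `B = (3 + 2c²)/min(1/2, c²)`, an embedding constant `C_∞` for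
`H^{⌊n/2⌋+1} ↪ L^∞` and an a priori-estimate constant `C_{m₀}`, if a smooth
spatially-Schwartz solution `u` on `[0,T]` satisfies `‖∂_t u(0)‖_∞ < 1/(2αε)` and
`√(E_{m₀}[u](0)) ≤ 1/(4√B C_∞ α ε)`, then with
`T₀ = 1/(C_{m₀} max(α,β) ε √B √(E_{m₀}[u](0)))`, for all `t ∈ [0, min(T, T₀)]` one has
`‖∂_t u(t)‖_∞ ≤ 1/(2αε)` and `E_{m₀}[u](t) ≤ 4B E_{m₀}[u](0)`. -/
theorem kuznetsov_lifespan_bound (n : ℕ) (hn : 1 ≤ n) (c α β ε T : ℝ)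
    (hc : 0 < c) (hα : 0 < α) (hβ : 0 < β) (hε : 0 < ε) (hT : 0 < T)
    (Cinf Cm0 : ℝ) (hCinf : 0 < Cinf) (hCm0 : 0 < Cm0)
    (hCinfProp : ∀ f : (Fin n → ℝ) → ℝ, IsSchwartz f →
      supNorm f ≤ Cinf * Real.sqrt (Hsq (n / 2 + 1) f))
    (hCm0Prop : ∀ T' : ℝ, 0 < T' → ∀ w : ℝ → (Fin n → ℝ) → ℝ, SmoothSchwartz w →
      (∀ t ∈ Set.Icc (0 : ℝ) T', InviscidKuznetsov c α β ε w t) →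
      (∀ t ∈ Set.Icc (0 : ℝ) T', supNorm (fun x => dt w t x) ≤ 1 / (2 * α * ε)) →
      ∀ t ∈ Set.Icc (0 : ℝ) T',
        Em (n / 2 + 2) w t ≤
          (3 + 2 * c ^ 2) / min (1 / 2) (c ^ 2) * Em (n / 2 + 2) w 0 +
            Cm0 * max α β * ε * ∫ τ in (0 : ℝ)..t, (Em (n / 2 + 2) w τ) ^ ((3 : ℝ) / 2))
    (u : ℝ → (Fin n → ℝ) → ℝ) (hu : SmoothSchwartz u)
    (hueq : ∀ t ∈ Set.Icc (0 : ℝ) T, InviscidKuznetsov c α β ε u t)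
    (hinit : supNorm (fun x => dt u 0 x) < 1 / (2 * α * ε))
    (hsmall : Real.sqrt (Em (n / 2 + 2) u 0) ≤
      1 / (4 * Real.sqrt ((3 + 2 * c ^ 2) / min (1 / 2) (c ^ 2)) * Cinf * α * ε)) :
    ∀ t ∈ Set.Icc (0 : ℝ)
        (min T (1 / (Cm0 * max α β * ε *
          Real.sqrt ((3 + 2 * c ^ 2) / min (1 / 2) (c ^ 2)) *
          Real.sqrt (Em (n / 2 + 2) u 0)))),
      supNorm (fun x => dt u t x) ≤ 1 / (2 * α * ε) ∧
        Em (n / 2 + 2) u t ≤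
          4 * ((3 + 2 * c ^ 2) / min (1 / 2) (c ^ 2)) * Em (n / 2 + 2) u 0 := by
  set B : ℝ := (3 + 2 * c ^ 2) / min (1 / 2) (c ^ 2) with hB
  set E₀ : ℝ := Em (n / 2 + 2) u 0 with hE₀
  set k : ℝ := Cm0 * max α β * ε with hk
  set M : ℝ := 1 / (2 * α * ε) with hM
  have hmin : 0 < min (1 / 2) (c ^ 2) := lt_min (by norm_num) (by positivity)
  have hB1 : 1 ≤ B := by
    rw [hB, le_div_iff₀ hmin]
    have := min_le_left (1 / 2) (c ^ 2)
    nlinarith [sq_nonneg c]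
  have hk0 : 0 < k := by
    have : 0 < max α β := lt_max_iff.2 (Or.inl hα)
    positivity
  have hE0 : 0 ≤ E₀ := Em_nonneg _ _
  have hUs : ContDiff ℝ (⊤ : ℕ∞) (kU u) := hu.1
  have hsup : ∀ t, (∀ x, |kpd none (kU u) (t, x)| ≤ M) → supNorm (fun x => dt u t x) ≤ M :=
    fun t h => ciSup_le fun x => by simpa only [dt_eq hu] using h x
  have hpt : ∀ t x, |kpd none (kU u) (t, x)| ≤ supNorm (fun x => dt u t x) := by
    intro t x
    rw [← dt_eq hu]
    exact (dt_schwartz hu t).abs_le_supNorm x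
  -- the nonlinear Gronwall estimate, as long as `|∂_t u|` stays below the threshold
  have energy : 0 < E₀ → ∀ t, 0 < t → t ≤ T →
      (∀ s ∈ Set.Icc 0 t, ∀ x, |kpd none (kU u) (s, x)| ≤ M) →
      ∀ θ < 1, k * √(B * E₀) * t ≤ 2 * θ →
      Em (n / 2 + 2) u t ≤ B * E₀ * ((1 - θ)⁻¹) ^ 2 := by
    intro hE0' t ht htT hgood θ hθ1 hkt
    refine bihari (fun s => Em_nonneg _ s) (by positivity) hk0 ht.le ?_ hθ1 hkt
    exact hCm0Prop t ht u hu (fun s hs => hueq s ⟨hs.1, hs.2.trans htT⟩)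
      (fun s hs => hsup s (hgood s hs))
  have hsq : √(B * E₀) = √B * √E₀ := Real.sqrt_mul (by linarith) _
  set T₀ : ℝ := 1 / (k * √B * √E₀) with hT₀
  have hE0pos : ∀ t, 0 < t → t ≤ T₀ → 0 < E₀ := by
    intro t ht htT
    refine hE0.lt_of_ne fun h => ?_
    rw [hT₀, ← h] at htT
    simp at htT
    linarith
  -- strict inequality strictly before `T₀`
  have strict : ∀ t, 0 < t → t ≤ T → t < T₀ →
      (∀ s ∈ Set.Icc 0 t, ∀ x, |kpd none (kU u) (s, x)| ≤ M) →
      supNorm (fun x => dt u t x) < M := by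
    intro t ht htT htT₀ hgood
    have hE' := hE0pos t ht htT₀.le
    have hA : 0 < √(B * E₀) := Real.sqrt_pos.2 (by positivity)
    have hlt : k * √(B * E₀) * t < 1 := by
      rw [hT₀, mul_assoc, ← hsq, lt_div_iff₀ (by positivity)] at htT₀
      linarith
    set θ := k * √(B * E₀) * t / 2 with hθ
    have hθ1 : 0 < 1 - θ := by linarith
    have h1 := energy hE' t ht htT hgood θ (by linarith) (by linarith)
    have h2 : √(Em (n / 2 + 2) u t) ≤ √(B * E₀) * (1 - θ)⁻¹ := by
      refine Real.sqrt_le_iff.2 ⟨by positivity, ?_⟩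
      rw [mul_pow, Real.sq_sqrt (by positivity)]
      exact h1
    have h3 : √(B * E₀) * (1 - θ)⁻¹ < √(B * E₀) * 2 := by
      refine mul_lt_mul_of_pos_left ?_ hA
      rw [inv_lt_comm₀ hθ1 (by norm_num)]
      linarith
    have h4 : Cinf * (√(B * E₀) * 2) ≤ M := by
      have hBs : 0 < √B := Real.sqrt_pos.2 (by linarith)
      rw [le_div_iff₀ (by positivity)] at hsmall
      rw [hM, le_div_iff₀ (by positivity), hsq]
      linarith
    calc _ ≤ Cinf * √(Hsq (n / 2 + 1) fun x => dt u t x) := hCinfProp _ (dt_schwartz hu t)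
      _ ≤ Cinf * √(Em (n / 2 + 2) u t) :=
        mul_le_mul_of_nonneg_left (Real.sqrt_le_sqrt (Hsq_dt_le_Em _ _)) hCinf.le
      _ ≤ Cinf * (√(B * E₀) * (1 - θ)⁻¹) := mul_le_mul_of_nonneg_left h2 hCinf.le
      _ < Cinf * (√(B * E₀) * 2) := mul_lt_mul_of_pos_left h3 hCinf
      _ ≤ M := h4
  have good : ∀ t ∈ Set.Icc 0 (min T T₀), ∀ x, |kpd none (kU u) (t, x)| ≤ M := by
    by_contra! hcon
    set S : Set ℝ := {t | t ∈ Set.Icc 0 (min T T₀) ∧ ∃ x, M < |kpd none (kU u) (t, x)|} with hS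
    have hne : S.Nonempty := by
      obtain ⟨t, ht, x, hx⟩ := hcon
      exact ⟨t, ht, x, hx⟩
    have hbdd : BddBelow S := ⟨0, fun t ht => ht.1.1⟩
    set t₁ := sInf S with ht₁
    have h0 : 0 ≤ t₁ := le_csInf hne fun t ht => ht.1.1
    obtain ⟨tb, htb⟩ := hne
    have hle : t₁ ≤ min T T₀ := (csInf_le hbdd htb).trans htb.1.2
    have hbefore : ∀ s, 0 ≤ s → s < t₁ → ∀ x, |kpd none (kU u) (s, x)| ≤ M := by
      intro s hs0 hs x
      by_contra! hx
      exact absurd (csInf_le hbdd ⟨⟨hs0, hs.le.trans hle⟩, x, hx⟩) (not_le.2 hs)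
    have hat : ∀ x, |kpd none (kU u) (t₁, x)| ≤ M := by
      intro x
      rcases h0.eq_or_lt with h | h
      · rw [← h]; exact (hpt 0 x).trans hinit.le
      · have hcont : Continuous fun s : ℝ => |kpd none (kU u) (s, x)| :=
          ((kpd_smooth hUs none).continuous.comp (by fun_prop : Continuous fun s : ℝ => (s, x))).abs
        refine le_of_tendsto (hcont.continuousWithinAt (s := Set.Iio t₁) (x := t₁)) ?_
        filter_upwards [Ioo_mem_nhdsLT h] with s hs
        exact hbefore s hs.1.le hs.2 x
    have hlt : t₁ < min T T₀ := by
      refine lt_of_lt_of_le ((csInf_le hbdd htb).lt_of_ne fun h => ?_) htb.1.2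
      obtain ⟨x, hx⟩ := htb.2
      rw [← h] at hx
      exact absurd (hat x) (not_le.2 hx)
    have hltT : t₁ < T := hlt.trans_le (min_le_left _ _)
    have hs1 : supNorm (fun x => dt u t₁ x) < M := by
      rcases h0.eq_or_lt with h | h
      · rw [← h]; exact hinit
      · refine strict t₁ h hltT.le (hlt.trans_le (min_le_right _ _)) fun s hs x => ?_
        rcases hs.2.eq_or_lt with h' | h'
        · rw [h']; exact hat x
        · exact hbefore s hs.1 h' x
    have hM2 : M = 1 / (2 * (α * ε)) := by rw [hM, mul_assoc]
    obtain ⟨N, hN⟩ := kD_bounded hu t₁ (2 * n + 2)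
    obtain ⟨δ, hδ, -, hloc⟩ := local_continuation hn hUs (a := α * ε) (b := β * ε) (c := c)
      (κ := M - supNorm (fun x => dt u t₁ x)) (N := N) (t₀ := t₁) (T := T) (by positivity)
      (by positivity) hc (by linarith) hltT
      (fun z hz => kuznetsov_kR hu (hueq z.1 ⟨h0.trans hz.1.1.le, hz.1.2.le⟩) z.2)
      (fun w _ h2 x => hN w h2 x)
      (fun x => by rw [← hM2]; linarith [hpt t₁ x])
    have : t₁ + δ ≤ t₁ := by
      refine le_csInf ⟨tb, htb⟩ fun t ht => ?_
      by_contra! h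
      obtain ⟨x, hx⟩ := ht.2
      have := hloc t ⟨csInf_le hbdd ht, h.le⟩ x
      rw [← hM2] at this
      exact absurd this (not_le.2 hx)
    linarith
  intro t ht
  refine ⟨hsup t (good t ht), ?_⟩
  rcases ht.1.eq_or_lt with h | h
  · rw [← h]
    change E₀ ≤ _
    nlinarith
  · have htT₀ : t ≤ T₀ := ht.2.trans (min_le_right _ _)
    have hE' := hE0pos t h htT₀
    have hA : 0 < √(B * E₀) := Real.sqrt_pos.2 (by positivity)
    have hle : k * √(B * E₀) * t ≤ 1 := by
      rw [hT₀, mul_assoc, ← hsq, le_div_iff₀ (by positivity)] at htT₀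
      linarith
    have := energy hE' t h (ht.2.trans (min_le_left _ _))
      (fun s hs => good s ⟨hs.1, hs.2.trans ht.2⟩) (1 / 2) (by norm_num) (by linarith)
    norm_num at this
    linarith
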